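/- arXiv:math/0210139 — 9 statements merged into one kernel-verified Lean document; each statement's English description precedes it below -/
import Mathlib

section
/- Let A be a unital complex *-algebra, q a nonzero real number, and x₀, x₁, …, x_n ∈ A with x₀ = x₀* elements satisfying the commutation relations (i) x_i x_j = q x_j x_i for 0 ≤ i < j ≤ n, (ii) x_i* x_j = q x_j x_i* for i ≠ j, and (iii) x_i x_i* − x_i* x_i = (1 − q⁻²) s_{i−1} for i = 1, …, n, where s₀ := x₀² and s_i := s_{i−1} + x_i* x_i. Then for all 0 ≤ i ≤ n and 0 ≤ j ≤ n: s_i x_j = q² x_j s_i and s_i x_j* = q⁻² x_j* s_i whenever i < j, while s_i x_j = x_j s_i and s_i x_j* = x_j* s_i whenever i ≥ j. In particular s_n commutes with every generator x_j and x_j*, i.e. the radius element is central in the algebra generated by x₀, …, x_n. -/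
/-- Partial radii for the quantum Euclidean space/even sphere:
`s 0 = x₀ * x₀` and `s (i+1) = s i + (x (i+1))* * x (i+1)`. -/
def sEven {A : Type*} [Ring A] [StarRing A] (x : ℕ → A) : ℕ → A
  | 0 => x 0 * x 0
  | i + 1 => sEven x i + star (x (i + 1)) * x (i + 1)

/-!
Write `s i` for `sEven x i`. Scalars picked up while `x j` moves through a product multiply. For
`i < j` both factors of `star (x i) * x i` contribute `q`, so every summand of `s i` contributes
`q ^ 2`; for `j < i` the two factors contribute `q` and `q⁻¹`, which cancel. So it remains to see
that `s j` commutes with `x j`. For `j ≥ 1` the third relation rewrites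
`s j = s (j - 1) + star (x j) * x j` as `x j * star (x j) + q⁻² • s (j - 1)`, and the first case
gives `q⁻² • (s (j - 1) * x j) = x j * s (j - 1)`. The relations with `star (x j)` follow by
applying the involution, since `s i` is self-adjoint.
-/

/-- The elements `a` and `b` commute up to the scalar `c`, which is picked up when `a` moves to the
right of `b`. -/
def QCommute {M A : Type*} [SMul M A] [Mul A] (c : M) (a b : A) : Prop :=
  a * b = c • (b * a)

namespace QCommute

theorem one_iff {M A : Type*} [Monoid M] [Mul A] [MulAction M A] {a b : A} :
    QCommute (1 : M) a b ↔ Commute a b := by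
  rw [QCommute, one_smul, commute_iff_eq]

theorem symm {G A : Type*} [Group G] [Mul A] [MulAction G A] {c : G} {a b : A}
    (h : QCommute c a b) : QCommute c⁻¹ b a :=
  eq_inv_smul_iff.mpr (Eq.symm h)

theorem mul_left {M A : Type*} [Monoid M] [Semigroup A] [MulAction M A] [IsScalarTower M A A]
    [SMulCommClass M A A] {c d : M} {a b y : A} (ha : QCommute c a y) (hb : QCommute d b y) :
    QCommute (c * d) (a * b) y :=
  calc a * b * y = a * y * (d • b) := by
        rw [mul_assoc, hb, mul_smul_comm, mul_smul_comm, mul_assoc]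
    _ = (c * d) • (y * (a * b)) := by
        rw [ha, smul_mul_assoc, mul_smul_comm, smul_smul, mul_assoc]

theorem add_left {M A : Type*} [NonUnitalNonAssocSemiring A] [DistribSMul M A]
    {c : M} {a b y : A} (ha : QCommute c a y) (hb : QCommute c b y) : QCommute c (a + b) y := by
  rw [QCommute, add_mul, mul_add, smul_add, ha, hb]

protected theorem star {M A : Type*} [Star M] [Mul A] [StarMul A] [SMul M A] [StarModule M A]
    {c : M} {a b : A} (h : QCommute c a b) : QCommute (star c) (star b) (star a) := by
  rw [QCommute, ← star_mul, ← star_mul, ← star_smul, h]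

theorem commute_add_mul {G A : Type*} [Group G] [NonUnitalRing A] [DistribMulAction G A]
    [IsScalarTower G A A] {c : G} {s a b : A} (hs : QCommute c s a)
    (hab : a * b - b * a = s - c⁻¹ • s) : Commute (s + b * a) a := by
  have hsum : s + b * a = a * b + c⁻¹ • s := by
    rw [← add_sub_cancel (b * a) (a * b), hab]; abel
  calc (s + b * a) * a = a * b * a + c⁻¹ • (s * a) := by rw [hsum, add_mul, smul_mul_assoc]
    _ = a * (s + b * a) := by rw [hs, inv_smul_smul, mul_add, mul_assoc, add_comm]

end QCommute

theorem sEven_isSelfAdjoint {A : Type*} [Ring A] [StarRing A] {x : ℕ → A}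
    (hx0 : IsSelfAdjoint (x 0)) (i : ℕ) : IsSelfAdjoint (sEven x i) := by
  induction i with
  | zero => exact (hx0.commute_iff hx0).mp (Commute.refl (x 0))
  | succ i ih => exact ih.add (IsSelfAdjoint.star_mul_self _)

/-- The relations of the quantum Euclidean space with real coordinate `x 0` and complex coordinates
`x 1, …, x n`, at an invertible scalar `q`; the other values of `x` are arbitrary. The third
relation is indexed by `i + 1`, which avoids truncated subtraction. -/
structure QuantumEuclidean {R A : Type*} [CommRing R] [Ring A] [StarRing A] [Algebra R A]
    (q : Rˣ) (n : ℕ) (x : ℕ → A) : Prop where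
  isSelfAdjoint_zero : IsSelfAdjoint (x 0)
  qCommute : ∀ {i j}, i < j → j ≤ n → QCommute q (x i) (x j)
  star_qCommute : ∀ {i j}, i ≤ n → j ≤ n → i ≠ j → QCommute q (star (x i)) (x j)
  commutator : ∀ {i}, i + 1 ≤ n → x (i + 1) * star (x (i + 1)) - star (x (i + 1)) * x (i + 1) =
    (1 - (↑(q ^ 2)⁻¹ : R)) • sEven x i

namespace QuantumEuclidean

variable {R A : Type*} [CommRing R] [Ring A] [StarRing A] [Algebra R A]
  {q : Rˣ} {n : ℕ} {x : ℕ → A} {i j : ℕ}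

theorem sEven_qCommute (h : QuantumEuclidean q n x) (hij : i < j) (hj : j ≤ n) :
    QCommute (q ^ 2) (sEven x i) (x j) := by
  rw [sq]
  induction i with
  | zero => exact (h.qCommute hij hj).mul_left (h.qCommute hij hj)
  | succ i ih =>
    have hstar : QCommute q (star (x (i + 1))) (x j) := h.star_qCommute (by lia) hj hij.ne
    exact (ih (by lia)).add_left (hstar.mul_left (h.qCommute hij hj))

theorem star_mul_self_commute (h : QuantumEuclidean q n x) (hji : j < i) (hi : i ≤ n) :
    Commute (star (x i) * x i) (x j) := by
  have hstar : QCommute q (star (x i)) (x j) := h.star_qCommute hi (by lia) hji.ne'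
  have hprod := hstar.mul_left (h.qCommute hji hi).symm
  rwa [mul_inv_cancel, QCommute.one_iff] at hprod

theorem sEven_commute_self (h : QuantumEuclidean q n x) (hj : j ≤ n) :
    Commute (sEven x j) (x j) := by
  cases j with
  | zero => exact (Commute.refl (x 0)).mul_left (Commute.refl (x 0))
  | succ i =>
    refine (h.sEven_qCommute i.lt_succ_self hj).commute_add_mul ?_
    rw [h.commutator hj, sub_smul, one_smul, Units.smul_def]

theorem sEven_commute (h : QuantumEuclidean q n x) (hji : j ≤ i) (hi : i ≤ n) :
    Commute (sEven x i) (x j) := by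
  induction i, hji using Nat.le_induction with
  | base => exact h.sEven_commute_self hi
  | succ i hji ih =>
    exact (ih (by lia)).add_left (h.star_mul_self_commute (by lia) hi)

theorem sEven_commute_star (h : QuantumEuclidean q n x) (hji : j ≤ i) (hi : i ≤ n) :
    Commute (sEven x i) (star (x j)) := by
  simpa only [(sEven_isSelfAdjoint h.isSelfAdjoint_zero i).star_eq]
    using (h.sEven_commute hji hi).star_star

theorem sEven_qCommute_star [StarRing R] [StarModule R A] (hq : IsSelfAdjoint q)
    (h : QuantumEuclidean q n x) (hij : i < j) (hj : j ≤ n) :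
    QCommute (q ^ 2)⁻¹ (sEven x i) (star (x j)) := by
  simpa only [(sEven_isSelfAdjoint h.isSelfAdjoint_zero i).star_eq, star_pow, hq.star_eq]
    using (h.sEven_qCommute hij hj).star.symm

end QuantumEuclidean

theorem sEven_commutation_general {R A : Type*} [CommRing R] [StarRing R] [Ring A] [StarRing A]
    [Algebra R A] [StarModule R A] {q : Rˣ} (hq : IsSelfAdjoint q) {n : ℕ} {x : ℕ → A}
    (h : QuantumEuclidean q n x) :
    (∀ i j : ℕ, i ≤ n → j ≤ n → i < j →
      sEven x i * x j = q ^ 2 • (x j * sEven x i) ∧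
      sEven x i * star (x j) = (q ^ 2)⁻¹ • (star (x j) * sEven x i)) ∧
    (∀ i j : ℕ, i ≤ n → j ≤ n → j ≤ i →
      sEven x i * x j = x j * sEven x i ∧
      sEven x i * star (x j) = star (x j) * sEven x i) ∧
    (∀ j : ℕ, j ≤ n →
      sEven x n * x j = x j * sEven x n ∧
      sEven x n * star (x j) = star (x j) * sEven x n) :=
  ⟨fun _ _ _ hj hij => ⟨h.sEven_qCommute hij hj, h.sEven_qCommute_star hq hij hj⟩,
    fun _ _ hi _ hji => ⟨h.sEven_commute hji hi, h.sEven_commute_star hji hi⟩,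
    fun _ hj => ⟨h.sEven_commute hj le_rfl, h.sEven_commute_star hj le_rfl⟩⟩

/-- In a unital complex *-algebra, if `x₀ = x₀*, x₁, …, xₙ` satisfy the quantum Euclidean
space relations, then `sᵢ xⱼ = q² xⱼ sᵢ` and `sᵢ xⱼ* = q⁻² xⱼ* sᵢ` for `i < j`, while `sᵢ`
commutes with `xⱼ` and `xⱼ*` for `i ≥ j`; in particular the radius `sₙ` is central in the
algebra generated by the `xᵢ`'s. -/
theorem sEven_commutation {A : Type*} [Ring A] [Algebra ℂ A] [StarRing A] [StarModule ℂ A]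
    (q : ℝ) (hq : q ≠ 0) (n : ℕ) (hn : 1 ≤ n) (x : ℕ → A)
    (hx0 : star (x 0) = x 0)
    (hrel1 : ∀ i j : ℕ, i < j → j ≤ n → x i * x j = (q : ℂ) • (x j * x i))
    (hrel2 : ∀ i j : ℕ, i ≤ n → j ≤ n → i ≠ j →
      star (x i) * x j = (q : ℂ) • (x j * star (x i)))
    (hrel3 : ∀ i : ℕ, 1 ≤ i → i ≤ n →
      x i * star (x i) - star (x i) * x i = (1 - ((q : ℂ) ^ 2)⁻¹) • sEven x (i - 1)) :
    (∀ i j : ℕ, i ≤ n → j ≤ n → i < j →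
      sEven x i * x j = ((q : ℂ) ^ 2) • (x j * sEven x i) ∧
      sEven x i * star (x j) = ((q : ℂ) ^ 2)⁻¹ • (star (x j) * sEven x i)) ∧
    (∀ i j : ℕ, i ≤ n → j ≤ n → j ≤ i →
      sEven x i * x j = x j * sEven x i ∧
      sEven x i * star (x j) = star (x j) * sEven x i) ∧
    (∀ j : ℕ, j ≤ n →
      sEven x n * x j = x j * sEven x n ∧
      sEven x n * star (x j) = star (x j) * sEven x n) := by
  have hqc : (q : ℂ) ≠ 0 := Complex.ofReal_ne_zero.mpr hq
  simpa [Units.smul_def] using sEven_commutation_general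
    (q := Units.mk0 (q : ℂ) hqc) (Units.ext (Complex.conj_ofReal q))
    ⟨hx0, hrel1 _ _, hrel2 _ _, fun hi => by simpa using hrel3 _ (Nat.le_add_left 1 _) hi⟩
end

section
/- Let A be a unital complex *-algebra, q a nonzero real number, and x₀, x₁, …, x_n ∈ A with x₀ = x₀* elements satisfying the relations x_i x_j = q x_j x_i (0 ≤ i < j ≤ n), x_i* x_j = q x_j x_i* (i ≠ j), and x_i x_i* − x_i* x_i = (1 − q⁻²) s_{i−1} (1 ≤ i ≤ n), where s₀ := x₀² and s_i := s_{i−1} + x_i* x_i. Then the elements s₀, s₁, …, s_n are mutually commuting: s_i s_j = s_j s_i for all 0 ≤ i, j ≤ n. -/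
/-!
For `i < k`, moving `x i` to the right past `(x k)*` costs a factor `q⁻¹` and past `x k` a factor
`q`, so `x i` commutes with `(x k)* * x k`. As this element is self-adjoint, `(x i)*` commutes with
it too. Hence every summand of `s i` commutes with all later increments of the partial radii.
-/

theorem commute_mul_of_mul_eq_smul_mul {R A : Type*} [Semigroup A] [SMul R A]
    [IsScalarTower R A A] [SMulCommClass R A A] {q : R} (hq : IsSMulRegular A q) {a b c : A}
    (hba : b * a = q • (a * b)) (hac : a * c = q • (c * a)) : Commute a (b * c) := by
  refine hq ?_
  calc q • (a * (b * c)) = q • (a * b) * c := by rw [smul_mul_assoc, mul_assoc]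
    _ = b * (a * c) := by rw [← hba, mul_assoc]
    _ = q • (b * c * a) := by rw [hac, mul_smul_comm, mul_assoc]

section sEven

variable {A : Type*} [Ring A] [StarRing A] {x : ℕ → A}

theorem sEven_commute_of_isSelfAdjoint {c : A} (hc : IsSelfAdjoint c) {i : ℕ}
    (h : ∀ j ≤ i, Commute (x j) c) : Commute (sEven x i) c := by
  induction i with
  | zero => exact (h 0 le_rfl).mul_left (h 0 le_rfl)
  | succ i ih =>
    have hx : Commute (x (i + 1)) c := h (i + 1) le_rfl
    have hx_star : Commute (star (x (i + 1))) c := commute_star_comm.mpr (by rwa [hc.star_eq])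
    exact (ih fun j hj ↦ h j (hj.trans i.le_succ)).add_left (hx_star.mul_left hx)

theorem sEven_commute_sEven_of_le {i j : ℕ} (hij : i ≤ j)
    (h : ∀ l k, l < k → k ≤ j → Commute (x l) (star (x k) * x k)) :
    Commute (sEven x i) (sEven x j) := by
  induction j, hij using Nat.le_induction with
  | base => exact Commute.refl _
  | succ j hij ih =>
    have h_increment : Commute (sEven x i) (star (x (j + 1)) * x (j + 1)) :=
      sEven_commute_of_isSelfAdjoint (.star_mul_self _) fun l hl ↦
        h l (j + 1) (Nat.lt_succ_of_le (hl.trans hij)) le_rfl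
    exact (ih fun l k hlk hk ↦ h l k hlk (hk.trans j.le_succ)).add_right h_increment

theorem sEven_mutually_commuting_general {R : Type*} [SMul R A] [IsScalarTower R A A]
    [SMulCommClass R A A] {q : R} (hq : IsSMulRegular A q) {n : ℕ}
    (h_mul : ∀ i j : ℕ, i < j → j ≤ n → x i * x j = q • (x j * x i))
    (h_star_mul : ∀ i j : ℕ, i < j → j ≤ n → star (x j) * x i = q • (x i * star (x j))) :
    ∀ i j : ℕ, i ≤ n → j ≤ n → Commute (sEven x i) (sEven x j) := by
  have h_commute (i k : ℕ) (hik : i < k) (hk : k ≤ n) : Commute (x i) (star (x k) * x k) :=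
    commute_mul_of_mul_eq_smul_mul hq (h_star_mul i k hik hk) (h_mul i k hik hk)
  intro i j hi hj
  rcases le_total i j with hij | hji
  · exact sEven_commute_sEven_of_le hij fun l k hlk hk ↦ h_commute l k hlk (hk.trans hj)
  · exact (sEven_commute_sEven_of_le hji fun l k hlk hk ↦ h_commute l k hlk (hk.trans hi)).symm

end sEven

/-- In a unital complex *-algebra, if `x₀ = x₀*, x₁, …, xₙ` satisfy the quantum Euclidean
space relations, then the partial radii `s₀, s₁, …, sₙ` are mutually commuting. -/
theorem sEven_mutually_commuting {A : Type*} [Ring A] [Algebra ℂ A] [StarRing A] [StarModule ℂ A]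
    (q : ℝ) (hq : q ≠ 0) (n : ℕ) (hn : 1 ≤ n) (x : ℕ → A)
    (hx0 : star (x 0) = x 0)
    (hrel1 : ∀ i j : ℕ, i < j → j ≤ n → x i * x j = (q : ℂ) • (x j * x i))
    (hrel2 : ∀ i j : ℕ, i ≤ n → j ≤ n → i ≠ j →
      star (x i) * x j = (q : ℂ) • (x j * star (x i)))
    (hrel3 : ∀ i : ℕ, 1 ≤ i → i ≤ n →
      x i * star (x i) - star (x i) * x i = (1 - ((q : ℂ) ^ 2)⁻¹) • sEven x (i - 1)) :
    ∀ i j : ℕ, i ≤ n → j ≤ n → sEven x i * sEven x j = sEven x j * sEven x i :=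
  sEven_mutually_commuting_general (smul_right_injective A (Complex.ofReal_ne_zero.mpr hq)) hrel1
    fun i j hij hj ↦ hrel2 j i hj (hij.le.trans hj) hij.ne'
end

section
/- Let A be a unital complex *-algebra, q a nonzero real number, and x₀, x₁, …, x_n ∈ A with x₀ = x₀*. Define recursively the 2^k × 2^k matrices u_{(2k)} over A by u_{(0)} = x₀ and u_{(2k)} = [[q⁻¹ u_{(2k−2)}, x_k·1], [x_k*·1, −u_{(2k−2)}]] in block form (x_k·1 denoting x_k times the 2^{k−1} × 2^{k−1} identity matrix). Then u_{(2n)}² = 1 (the 2^n × 2^n identity matrix) if and only if the S^{2n}_q relations hold, namely: x_i x_j = q x_j x_i for 0 ≤ i < j ≤ n; x_i* x_j = q x_j x_i* for i ≠ j; x_i x_i* − x_i* x_i = (1 − q⁻²) s_{i−1} for i = 1, …, n; and s_n = 1, where s₀ := x₀² and s_i := s_{i−1} + x_i* x_i. -/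
/-- The recursively defined matrices `u_{(2k)}`:  `u_{(0)} = x₀` and
`u_{(2k)} = [[q⁻¹ u_{(2k-2)}, x_k · 1], [x_k* · 1, -u_{(2k-2)}]]`, as `2^k × 2^k`
matrices over `A`. -/
noncomputable def uMat {A : Type*} [Ring A] [Algebra ℂ A] [StarRing A] (q : ℝ) (x : ℕ → A) :
    (k : ℕ) → Matrix (Fin (2 ^ k)) (Fin (2 ^ k)) A
  | 0 => Matrix.of fun _ _ => x 0
  | k + 1 =>
    Matrix.reindex (finSumFinEquiv.trans (finCongr (by rw [pow_succ, mul_two])))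
      (finSumFinEquiv.trans (finCongr (by rw [pow_succ, mul_two])))
      (Matrix.fromBlocks ((q : ℂ)⁻¹ • uMat q x k)
        (x (k + 1) • (1 : Matrix (Fin (2 ^ k)) (Fin (2 ^ k)) A))
        (star (x (k + 1)) • (1 : Matrix (Fin (2 ^ k)) (Fin (2 ^ k)) A))
        (-uMat q x k))

/-!
Write `y = x_{k+1}` and let `U = u_{(2k)}`, which is Hermitian because `q` is real and `x₀` is
self-adjoint. The off-diagonal blocks of `u_{(2k+2)}²` are `q⁻¹ U y - y U` and its adjoint, and
they vanish iff every entry `a` of `U` satisfies `a y = q y a`. This condition is linear in `a` and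
the entries of `U` span the same space as the `x_i` and `x_i*` with `i ≤ k`, so it amounts to the
relations of these with `y`. The diagonal blocks are `q⁻² U² + y y*` and `U² + y* y`, so both equal
`c` iff `U² = c - y* y` and `y y* - y* y = (1 - q⁻²) (c - y* y)`. As `c - y* y` need not be `1`,
the induction is carried out for `u_{(2n)}² = c` with `c ∈ A` arbitrary.
-/

section qCommutant

variable {K A : Type*}

/-- The `q`-commutant of `y`: the space of all `a` with `a y = q y a`. In `S^{2n}_q` that of `x_k`
contains `x_i` and `x_i*` for all `i < k`. -/
def qCommutant [CommSemiring K] [Semiring A] [Algebra K A] (q : K) (y : A) : Submodule K A :=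
  LinearMap.eqLocus (LinearMap.mulRight K y) (q • LinearMap.mulLeft K y)

theorem mem_qCommutant [CommSemiring K] [Semiring A] [Algebra K A] {q : K} {y a : A} :
    a ∈ qCommutant q y ↔ a * y = q • (y * a) :=
  Iff.rfl

theorem star_mem_qCommutant_iff [CommSemiring K] [StarRing K] [Semiring A] [StarRing A]
    [Algebra K A] [StarModule K A] {q : K} (hq : IsSelfAdjoint q) {y a : A} :
    star y ∈ qCommutant q a ↔ star a ∈ qCommutant q y := by
  rw [mem_qCommutant, mem_qCommutant, ← star_inj]
  simp only [star_mul, star_smul, star_star, hq.star_eq]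

open Matrix RightActions in
theorem inv_smul_op_smul_sub_smul_eq_zero_iff {m n : Type*} [Field K] [Ring A] [Algebra K A]
    {q : K} (hq : q ≠ 0) (U : Matrix m n A) (y : A) :
    q⁻¹ • (U <• y) - y • U = 0 ↔ ∀ i j, U i j ∈ qCommutant q y := by
  rw [sub_eq_zero, inv_smul_eq_iff₀ hq, ← Matrix.ext_iff]
  rfl

end qCommutant

section Relations

variable {K A : Type*} [Field K] [Ring A] [StarRing A] [Algebra K A]

/-- The commutation relations of the quantum Euclidean space with generators `x₀, …, x_n`: the
relations of `S^{2n}_q` other than the sphere relation `s_n = 1`. -/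
def QuantumEuclideanRelations (q : K) (x : ℕ → A) (n : ℕ) : Prop :=
  (∀ i j : ℕ, i < j → j ≤ n → x i * x j = q • (x j * x i)) ∧
  (∀ i j : ℕ, i ≤ n → j ≤ n → i ≠ j → star (x i) * x j = q • (x j * star (x i))) ∧
  (∀ i : ℕ, 1 ≤ i → i ≤ n →
    x i * star (x i) - star (x i) * x i = (1 - (q ^ 2)⁻¹) • sEven x (i - 1))

theorem quantumEuclideanRelations_zero (q : K) (x : ℕ → A) : QuantumEuclideanRelations q x 0 :=
  ⟨by lia, by lia, by lia⟩

theorem quantumEuclideanRelations_succ_iff [StarRing K] [StarModule K A] {q : K}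
    (hq : IsSelfAdjoint q) (x : ℕ → A) (n : ℕ) :
    QuantumEuclideanRelations q x (n + 1) ↔
      QuantumEuclideanRelations q x n ∧
      (∀ i ≤ n, x i ∈ qCommutant q (x (n + 1)) ∧ star (x i) ∈ qCommutant q (x (n + 1))) ∧
      x (n + 1) * star (x (n + 1)) - star (x (n + 1)) * x (n + 1) =
        (1 - (q ^ 2)⁻¹) • sEven x n := by
  constructor
  · rintro ⟨hxx, hsx, hnormal⟩
    exact ⟨⟨fun i j hij hj => hxx i j hij (by lia),
        fun i j hi hj => hsx i j (by lia) (by lia), fun i hi hin => hnormal i hi (by lia)⟩,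
      fun i hi => ⟨hxx i _ (by lia) le_rfl, hsx i _ (by lia) le_rfl (by lia)⟩,
      hnormal (n + 1) (by lia) le_rfl⟩
  · rintro ⟨⟨hxx, hsx, hnormal⟩, hlast, hnormal_last⟩
    refine ⟨fun i j hij hj => ?_, fun i j hi hj hij => ?_, fun i hi hin => ?_⟩
    · obtain hj | rfl := Nat.le_succ_iff.1 hj
      · exact hxx i j hij hj
      · exact (hlast i (by lia)).1
    · obtain hj | rfl := Nat.le_succ_iff.1 hj
      · obtain hi | rfl := Nat.le_succ_iff.1 hi
        · exact hsx i j hi hj hij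
        · exact (star_mem_qCommutant_iff hq).2 (hlast j hj).2
      · exact (hlast i (by lia)).2
    · obtain hin | rfl := Nat.le_succ_iff.1 hin
      · exact hnormal i hi hin
      · exact hnormal_last

end Relations

section UnipotentBlock

open Matrix
open scoped RightActions

variable {K A m : Type*} [Field K] [Ring A] [StarRing A] [Algebra K A] [DecidableEq m]

/-- The block matrix `[[q⁻¹ U, y·1], [y*·1, -U]]` that produces `u_{(2k)}` from `U = u_{(2k-2)}` and
`y = x_k`. -/
def unipotentBlock (q : K) (U : Matrix m m A) (y : A) : Matrix (m ⊕ m) (m ⊕ m) A :=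
  fromBlocks (q⁻¹ • U) (y • (1 : Matrix m m A)) (star y • (1 : Matrix m m A)) (-U)

theorem forall_unipotentBlock_mem_iff [Nonempty m] {q : K} (hq : q ≠ 0) (U : Matrix m m A) (y : A)
    (S : Submodule K A) :
    (∀ i j, unipotentBlock q U y i j ∈ S) ↔ (∀ i j, U i j ∈ S) ∧ y ∈ S ∧ star y ∈ S := by
  have smul_one_mem (a : A) : (∀ i j, (a • (1 : Matrix m m A)) i j ∈ S) ↔ a ∈ S := by
    refine ⟨fun h => ?_, fun ha i j => ?_⟩
    · obtain ⟨i⟩ := ‹Nonempty m›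
      simpa using h i i
    · obtain rfl | hij := eq_or_ne i j
      · simpa using ha
      · simp [one_apply_ne hij]
  have inv_smul_mem (i j : m) : (q⁻¹ • U) i j ∈ S ↔ U i j ∈ S :=
    S.smul_mem_iff (inv_ne_zero hq)
  simp only [unipotentBlock, Sum.forall, fromBlocks_apply₁₁, fromBlocks_apply₁₂,
    fromBlocks_apply₂₁, fromBlocks_apply₂₂, forall_and, smul_one_mem, inv_smul_mem,
    Matrix.neg_apply, neg_mem_iff]
  tauto

variable [StarRing K] [StarModule K A]

theorem isHermitian_unipotentBlock {q : K} (hq : IsSelfAdjoint q) {U : Matrix m m A}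
    (hU : U.IsHermitian) (y : A) : (unipotentBlock q U y).IsHermitian := by
  refine IsHermitian.fromBlocks ?_ ?_ hU.neg
  · rw [IsHermitian, conjTranspose_smul, hU.eq, star_inv₀, hq.star_eq]
  · simp [smul_one_eq_diagonal, diagonal_conjTranspose, Pi.star_def]

variable [Fintype m]

theorem unipotentBlock_mul_self {q : K} (hq : IsSelfAdjoint q) {U : Matrix m m A}
    (hU : U.IsHermitian) (y : A) :
    unipotentBlock q U y * unipotentBlock q U y =
      fromBlocks ((q ^ 2)⁻¹ • (U * U) + (y * star y) • (1 : Matrix m m A))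
        (q⁻¹ • (U <• y) - y • U) (q⁻¹ • (U <• y) - y • U)ᴴ
        (U * U + (star y * y) • (1 : Matrix m m A)) := by
  have mul_smul_one (a : A) : U * a • (1 : Matrix m m A) = U <• a := by
    rw [smul_one_eq_diagonal, op_smul_eq_mul_diagonal]
  have adjoint : (q⁻¹ • (U <• y) - y • U)ᴴ = q⁻¹ • (star y • U) - U <• star y := by
    ext i j
    simp [hU.apply, hq.star_eq, star_inv₀]
  rw [unipotentBlock, fromBlocks_multiply, adjoint]
  congr 1
  · simp [smul_smul, sq]
  · simp [mul_smul_one, sub_eq_add_neg]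
  · simp [mul_smul_one, sub_eq_add_neg]
  · simp [smul_smul, add_comm]

theorem unipotentBlock_mul_self_eq_smul_one_iff [Nonempty m] {q : K} (hq₀ : q ≠ 0)
    (hq : IsSelfAdjoint q) {U : Matrix m m A} (hU : U.IsHermitian) (y c : A) :
    unipotentBlock q U y * unipotentBlock q U y = c • 1 ↔
      U * U = (c - star y * y) • 1 ∧ (∀ i j, U i j ∈ qCommutant q y) ∧
      y * star y - star y * y = (1 - (q ^ 2)⁻¹) • (c - star y * y) := by
  have smul_one_inj (a b : A) : a • (1 : Matrix m m A) = b • 1 ↔ a = b := by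
    rw [smul_one_eq_diagonal, smul_one_eq_diagonal, diagonal_eq_diagonal_iff, forall_const]
  have lowerRight : U * U + (star y * y) • (1 : Matrix m m A) = c • 1 ↔
      U * U = (c - star y * y) • 1 := by
    rw [sub_smul, eq_sub_iff_add_eq]
  have upperLeft (hUU : U * U = (c - star y * y) • 1) :
      (q ^ 2)⁻¹ • (U * U) + (y * star y) • (1 : Matrix m m A) = c • 1 ↔
        y * star y - star y * y = (1 - (q ^ 2)⁻¹) • (c - star y * y) := by
    rw [hUU, ← smul_assoc, ← add_smul, smul_one_inj, sub_smul, one_smul, ← eq_sub_iff_add_eq',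
      sub_right_comm, sub_left_inj]
  rw [unipotentBlock_mul_self hq hU, ← fromBlocks_one, fromBlocks_smul, smul_zero,
    fromBlocks_inj, conjTranspose_eq_zero, inv_smul_op_smul_sub_smul_eq_zero_iff hq₀, lowerRight]
  constructor
  · rintro ⟨hul, hcomm, -, hUU⟩
    exact ⟨hUU, hcomm, (upperLeft hUU).1 hul⟩
  · rintro ⟨hUU, hcomm, hnormal⟩
    exact ⟨(upperLeft hUU).2 hnormal, hcomm, hcomm, hUU⟩

end UnipotentBlock

section UMat

open Matrix

variable {A : Type*} [Ring A] [Algebra ℂ A] [StarRing A]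

theorem uMat_succ (q : ℝ) (x : ℕ → A) (k : ℕ) :
    ∃ e : Fin (2 ^ k) ⊕ Fin (2 ^ k) ≃ Fin (2 ^ (k + 1)),
      uMat q x (k + 1) = reindex e e (unipotentBlock (q : ℂ) (uMat q x k) (x (k + 1))) :=
  ⟨_, rfl⟩

theorem isHermitian_uMat [StarModule ℂ A] (q : ℝ) {x : ℕ → A} (hx₀ : star (x 0) = x 0) (k : ℕ) :
    (uMat q x k).IsHermitian := by
  induction k with
  | zero => exact Matrix.ext fun _ _ => hx₀
  | succ k ih =>
    obtain ⟨e, he⟩ := uMat_succ q x k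
    rw [he]
    exact (isHermitian_unipotentBlock (Complex.conj_ofReal q) ih _).reindex e

theorem forall_uMat_mem_iff {q : ℝ} (hq : q ≠ 0) {x : ℕ → A} (hx₀ : star (x 0) = x 0)
    (S : Submodule ℂ A) (k : ℕ) :
    (∀ i j, uMat q x k i j ∈ S) ↔ ∀ i ≤ k, x i ∈ S ∧ star (x i) ∈ S := by
  induction k with
  | zero => simp [uMat, hx₀]
  | succ k ih =>
    obtain ⟨e, he⟩ := uMat_succ q x k
    have reindex_mem : (∀ i j, uMat q x (k + 1) i j ∈ S) ↔
        ∀ i j, unipotentBlock (q : ℂ) (uMat q x k) (x (k + 1)) i j ∈ S := by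
      simp only [he, reindex_apply, submatrix_apply, e.symm.forall_congr_left,
        Equiv.symm_symm, Equiv.symm_apply_apply]
    rw [reindex_mem, forall_unipotentBlock_mem_iff (Complex.ofReal_ne_zero.2 hq), ih]
    simp only [Nat.le_succ_iff, or_imp, forall_and, forall_eq]
    tauto

theorem uMat_succ_mul_self_eq_smul_one_iff [StarModule ℂ A] {q : ℝ} (hq : q ≠ 0) {x : ℕ → A}
    (hx₀ : star (x 0) = x 0) (k : ℕ) (c : A) :
    uMat q x (k + 1) * uMat q x (k + 1) = c • 1 ↔
      uMat q x k * uMat q x k = (c - star (x (k + 1)) * x (k + 1)) • 1 ∧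
      (∀ i ≤ k, x i ∈ qCommutant (q : ℂ) (x (k + 1)) ∧
        star (x i) ∈ qCommutant (q : ℂ) (x (k + 1))) ∧
      x (k + 1) * star (x (k + 1)) - star (x (k + 1)) * x (k + 1) =
        (1 - ((q : ℂ) ^ 2)⁻¹) • (c - star (x (k + 1)) * x (k + 1)) := by
  obtain ⟨e, he⟩ := uMat_succ q x k
  have smul_one_eq : c • 1 = reindex e e (c • (1 : Matrix (Fin (2 ^ k) ⊕ Fin (2 ^ k)) _ A)) := by
    simp [submatrix_smul]
  rw [← forall_uMat_mem_iff hq hx₀, ← unipotentBlock_mul_self_eq_smul_one_iff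
    (Complex.ofReal_ne_zero.2 hq) (Complex.conj_ofReal q) (isHermitian_uMat q hx₀ k), he,
    smul_one_eq, ← (reindex e e).injective.eq_iff]
  simp only [reindex_apply, submatrix_mul_equiv]

theorem uMat_zero_mul_self_eq_smul_one_iff (q : ℝ) (x : ℕ → A) (c : A) :
    uMat q x 0 * uMat q x 0 = c • 1 ↔ sEven x 0 = c := by
  simp [uMat, sEven, ← Matrix.ext_iff, mul_apply]

theorem uMat_sq_one_iff_sphere_relations_general [StarModule ℂ A] {q : ℝ} (hq : q ≠ 0) {x : ℕ → A}
    (hx₀ : star (x 0) = x 0) (n : ℕ) (c : A) :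
    uMat q x n * uMat q x n = c • 1 ↔
      QuantumEuclideanRelations (q : ℂ) x n ∧ sEven x n = c := by
  induction n generalizing c with
  | zero =>
    rw [uMat_zero_mul_self_eq_smul_one_iff, and_iff_right (quantumEuclideanRelations_zero _ x)]
  | succ k ih =>
    rw [uMat_succ_mul_self_eq_smul_one_iff hq hx₀, ih,
      quantumEuclideanRelations_succ_iff (Complex.conj_ofReal q), sEven, ← eq_sub_iff_add_eq]
    constructor
    · rintro ⟨⟨hrel, hs⟩, hcomm, hnormal⟩
      exact ⟨⟨hrel, hcomm, hs ▸ hnormal⟩, hs⟩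
    · rintro ⟨⟨hrel, hcomm, hnormal⟩, hs⟩
      exact ⟨⟨hrel, hs⟩, hcomm, hs ▸ hnormal⟩

end UMat

/-- For `x₀` self-adjoint, the unipotency condition `u_{(2n)}² = 1` is equivalent to the
defining relations of the even quantum Euclidean sphere `S^{2n}_q`. -/
theorem uMat_sq_one_iff_sphere_relations {A : Type*} [Ring A] [Algebra ℂ A] [StarRing A]
    [StarModule ℂ A] (q : ℝ) (hq : q ≠ 0) (n : ℕ) (hn : 1 ≤ n) (x : ℕ → A)
    (hx0 : star (x 0) = x 0) :
    uMat q x n * uMat q x n = 1 ↔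
      ((∀ i j : ℕ, i < j → j ≤ n → x i * x j = (q : ℂ) • (x j * x i)) ∧
       (∀ i j : ℕ, i ≤ n → j ≤ n → i ≠ j →
         star (x i) * x j = (q : ℂ) • (x j * star (x i))) ∧
       (∀ i : ℕ, 1 ≤ i → i ≤ n →
         x i * star (x i) - star (x i) * x i = (1 - ((q : ℂ) ^ 2)⁻¹) • sEven x (i - 1)) ∧
       sEven x n = 1) := by
  simpa only [one_smul, QuantumEuclideanRelations, and_assoc] using
    uMat_sq_one_iff_sphere_relations_general hq hx0 n 1
end

section
/- Let q ∈ ℝ with q² > 1 and let S be a nonempty closed subset of the interval [0,1] satisfying {1} ∪ S = {1} ∪ q⁻²·S, where q⁻²·S := {q⁻² s : s ∈ S}. Then either S = {0} or S = {0} ∪ {q^{−2k} : k = 0, 1, 2, …}. -/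
/-!
Points of `S` other than `e` can be divided by `r` inside `S`. A point outside the orbit
`{rᵏ • e}` never reaches `e` under repeated division, so it equals `rⁿ • tₙ` with `tₙ ∈ S` for
every `n`; boundedness of `S` then forces it to be `0`. If `e ∉ S`, this applies to every point
of `S`. If `e ∈ S`, then `S` is stable under `r`, so it contains the orbit and its limit `0`.
-/

section ScalingInvariant

open Filter Topology
open scoped Pointwise

theorem subset_pow_smul_of_subset_smul {M α : Type*} [Monoid M] [MulAction M α] {r : M}
    {S : Set α} (h : S ⊆ r • S) (n : ℕ) : S ⊆ r ^ n • S := by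
  induction n with
  | zero => simp
  | succ n ih =>
    calc S ⊆ r • S := h
      _ ⊆ r • r ^ n • S := Set.smul_set_mono ih
      _ = r ^ (n + 1) • S := by rw [smul_smul, pow_succ']

theorem pow_smul_mem_of_smul_subset {M α : Type*} [Monoid M] [MulAction M α] {r : M}
    {S : Set α} (h : r • S ⊆ S) {x : α} (hx : x ∈ S) (n : ℕ) : r ^ n • x ∈ S := by
  induction n with
  | zero => simpa
  | succ n ih =>
    rw [pow_succ', mul_smul]
    exact h (Set.smul_mem_smul_set ih)

variable {𝕜 E : Type*} [NormedField 𝕜] [AddCommGroup E] [Module 𝕜 E] [TopologicalSpace E]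
  {r : 𝕜} {S : Set E} {e : E}

theorem subset_zero_of_subset_smul [T1Space E] (hr : ‖r‖ < 1)
    (hS : Bornology.IsVonNBounded 𝕜 S) (h : S ⊆ r • S) : S ⊆ {0} := by
  intro s hs
  have divisible (n : ℕ) : ∃ t ∈ S, r ^ n • t = s := subset_pow_smul_of_subset_smul h n hs
  choose t htS hts using divisible
  have tendsto_zero : Tendsto (fun n ↦ r ^ n • t n) atTop (𝓝 0) :=
    hS.smul_tendsto_zero (.of_forall htS) (tendsto_pow_atTop_nhds_zero_of_norm_lt_one hr)
  simp only [hts] at tendsto_zero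
  exact tendsto_const_nhds_iff.mp tendsto_zero

theorem subset_zero_union_range_pow_smul [T1Space E] (hr : ‖r‖ < 1)
    (hS : Bornology.IsVonNBounded 𝕜 S) (h : S ⊆ {e} ∪ r • S) :
    S ⊆ {0} ∪ Set.range fun k : ℕ ↦ r ^ k • e := by
  set orbit := Set.range fun k : ℕ ↦ r ^ k • e
  have sdiff_orbit_subset : S \ orbit ⊆ r • (S \ orbit) := by
    rintro s ⟨hs, h_orbit⟩
    obtain rfl | ⟨t, ht, rfl⟩ := h hs
    · exact absurd ⟨0, by simp⟩ h_orbit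
    · refine Set.smul_mem_smul_set ⟨ht, ?_⟩
      rintro ⟨k, rfl⟩
      exact h_orbit ⟨k + 1, by simp only [pow_succ', mul_smul]⟩
  rw [Set.union_comm, ← Set.sdiff_subset_iff]
  exact subset_zero_of_subset_smul hr (hS.subset Set.sdiff_subset) sdiff_orbit_subset

theorem zero_mem_of_isClosed_of_smul_subset [ContinuousSMul 𝕜 E] (hr : ‖r‖ < 1)
    (hne : S.Nonempty) (hcl : IsClosed S) (h : r • S ⊆ S) : (0 : E) ∈ S := by
  obtain ⟨s, hs⟩ := hne
  have tendsto_zero : Tendsto (fun n : ℕ ↦ r ^ n • s) atTop (𝓝 0) := by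
    simpa using (tendsto_pow_atTop_nhds_zero_of_norm_lt_one hr).smul_const s
  exact hcl.mem_of_tendsto tendsto_zero (.of_forall (pow_smul_mem_of_smul_subset h hs))

theorem closed_scaling_invariant_subset_general [T1Space E] [ContinuousSMul 𝕜 E] (hr : ‖r‖ < 1)
    (hne : S.Nonempty) (hcl : IsClosed S) (hS : Bornology.IsVonNBounded 𝕜 S)
    (hinv : {e} ∪ S = {e} ∪ r • S) :
    S = {0} ∨ S = {0} ∪ Set.range fun k : ℕ ↦ r ^ k • e := by
  have subset_union : S ⊆ {e} ∪ r • S := hinv ▸ Set.subset_union_right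
  by_cases he : e ∈ S
  · right
    have smul_subset : r • S ⊆ S := by
      calc r • S ⊆ {e} ∪ r • S := Set.subset_union_right
        _ = {e} ∪ S := hinv.symm
        _ = S := Set.union_eq_right.mpr (Set.singleton_subset_iff.mpr he)
    refine (subset_zero_union_range_pow_smul hr hS subset_union).antisymm (Set.union_subset ?_ ?_)
    · exact Set.singleton_subset_iff.mpr
        (zero_mem_of_isClosed_of_smul_subset hr hne hcl smul_subset)
    · exact Set.range_subset_iff.mpr (pow_smul_mem_of_smul_subset smul_subset he)
  · left
    have subset_smul : S ⊆ r • S :=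
      (Set.disjoint_singleton_right.mpr he).subset_right_of_subset_union subset_union
    exact hne.subset_singleton_iff.mp (subset_zero_of_subset_smul hr hS subset_smul)

end ScalingInvariant

/-- If `q² > 1` and `S` is a nonempty closed subset of `[0,1]` with
`{1} ∪ S = {1} ∪ q⁻²·S`, then `S = {0}` or `S = {0} ∪ {q^{-2k} : k ∈ ℕ}`. -/
theorem closed_scaling_invariant_subset (q : ℝ) (hq : 1 < q ^ 2) (S : Set ℝ)
    (hne : S.Nonempty) (hcl : IsClosed S) (hsub : S ⊆ Set.Icc 0 1)
    (hinv : {1} ∪ S = {1} ∪ (fun s => (q ^ 2)⁻¹ * s) '' S) :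
    S = {0} ∨ S = {0} ∪ Set.range fun k : ℕ => (q ^ (2 * k))⁻¹ := by
  have norm_lt_one : ‖(q ^ 2)⁻¹‖ < 1 := by simpa using inv_lt_one_of_one_lt₀ hq
  have bounded : Bornology.IsVonNBounded ℝ S :=
    (NormedSpace.isVonNBounded_iff ℝ).mpr ((Metric.isBounded_Icc 0 1).subset hsub)
  simpa only [smul_eq_mul, mul_one, inv_pow, ← pow_mul] using
    closed_scaling_invariant_subset_general norm_lt_one hne hcl bounded hinv
end

section
/- Let q ∈ ℝ with |q| > 1, n ≥ 1, λ ∈ ℂ with |λ| = 1, and let H = ℓ²(ℕⁿ) with standard orthonormal basis (e_k) indexed by k = (k₁, …, k_n) ∈ ℕⁿ. Define operators on H by: X₁ e_k = λ q^{−(k₁+⋯+k_n)} e_k, and for i = 2, …, n+1, X_i e_k = (1 − q^{−2k_{i−1}})^{1/2} q^{−(k_i+⋯+k_n)} e_{k − δ_{i−1}} (interpreted as 0 when k_{i−1} = 0, where δ_{i−1} decreases the (i−1)-th index by 1). Then these formulas define bounded operators X₁, …, X_{n+1} on H satisfying the S^{2n+1}_q relations: X_i X_j = q X_j X_i for 1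 ≤ i < j ≤ n+1; X_i* X_j = q X_j X_i* for i ≠ j; X₁ X₁* = X₁* X₁; X_i X_i* − X_i* X_i = (1 − q⁻²) S_{i−1} for i = 2, …, n+1; and S_{n+1} = 1, where S₀ := 0 and S_i := S_{i−1} + X_i* X_i. -/
/-- Partial radii for the odd spheres: `s 0 = 0` and `s (i+1) = s i + (x (i+1))* * x (i+1)`. -/
def sOdd {A : Type*} [Ring A] [StarRing A] (x : ℕ → A) : ℕ → A
  | 0 => 0
  | i + 1 => sOdd x i + star (x (i + 1)) * x (i + 1)

/-- The standard orthonormal basis vector of `ℓ²(ℕⁿ)` at `k`. -/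
noncomputable def eVec (n : ℕ) (k : Fin n → ℕ) : lp (fun _ : Fin n → ℕ => ℂ) 2 :=
  lp.single 2 k 1

/-!
Each `X_i` is a weighted composition operator `x ↦ (m ↦ w_i m * x (m + d_i))`, where `d_1 = 0` and
`d_{j+1}` is the `j`-th unit vector. For `i < j`, translating by `d_j` multiplies `w_i` by `q⁻¹`,
and translating by `d_i` leaves `w_j` unchanged; both quadratic relations follow from this.
The products `X_i* X_i` and `X_i X_i*` are diagonal, and `X_i* X_i` has entry
`q ^ (-2(k_i + ⋯ + k_n)) - q ^ (-2(k_{i-1} + ⋯ + k_n))` at `k` for `i ≥ 2`. The sums `S_i` therefore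
telescope to the diagonal operators with entries `q ^ (-2(k_i + ⋯ + k_n))`.
-/

section WeightedComposition

open scoped lp ENNReal ComplexConjugate

variable {ι κ 𝕜 : Type*} [RCLike 𝕜]

theorem sum_norm_mul_comp_rpow_le {p : ℝ≥0∞} (hp : 0 < p.toReal) (w : ℓ^∞(ι, 𝕜)) (g : ι ↪ κ)
    (x : ℓ^p(κ, 𝕜)) (s : Finset ι) :
    ∑ m ∈ s, ‖w m * x (g m)‖ ^ p.toReal ≤ (‖w‖ * ‖x‖) ^ p.toReal := by
  calc ∑ m ∈ s, ‖w m * x (g m)‖ ^ p.toReal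
      ≤ ∑ m ∈ s, ‖w‖ ^ p.toReal * ‖x (g m)‖ ^ p.toReal := by
        gcongr with m
        rw [norm_mul, Real.mul_rpow (norm_nonneg _) (norm_nonneg _)]
        gcongr
        exact lp.norm_apply_le_norm ENNReal.top_ne_zero w m
    _ = ‖w‖ ^ p.toReal * ∑ m ∈ s.map g, ‖x m‖ ^ p.toReal := by
        rw [Finset.sum_map, Finset.mul_sum]
    _ ≤ ‖w‖ ^ p.toReal * ‖x‖ ^ p.toReal := by
        gcongr
        exact lp.sum_rpow_le_norm_rpow hp x _
    _ = (‖w‖ * ‖x‖) ^ p.toReal := (Real.mul_rpow (norm_nonneg _) (lp.norm_nonneg' _)).symm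

/-- The weighted composition operator `x ↦ (m ↦ w m * x (g m))` from `ℓ²(κ)` to `ℓ²(ι)`, for a
bounded weight `w` and an injection `g`. Its adjoint sends the basis vector at `m` to
`conj (w m)` times the one at `g m`, so it is a lowering operator when `g` raises indices. -/
noncomputable def weightedComp (w : ℓ^∞(ι, 𝕜)) (g : ι ↪ κ) : ℓ²(κ, 𝕜) →L[𝕜] ℓ²(ι, 𝕜) :=
  LinearMap.mkContinuous
    { toFun := fun x => ⟨fun m => w m * x (g m),
        memℓp_gen' (sum_norm_mul_comp_rpow_le (by simp) w g x)⟩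
      map_add' := fun x y => by ext m; exact mul_add (w m) (x (g m)) (y (g m))
      map_smul' := fun c x => by ext m; exact mul_left_comm (w m) c (x (g m)) }
    ‖w‖
    fun x => lp.norm_le_of_forall_sum_le (by simp) (by positivity)
      (sum_norm_mul_comp_rpow_le (by simp) w g x)

theorem weightedComp_apply (w : ℓ^∞(ι, 𝕜)) (g : ι ↪ κ) (x : ℓ²(κ, 𝕜)) (m : ι) :
    weightedComp w g x m = w m * x (g m) :=
  rfl

theorem weightedComp_single [DecidableEq ι] [DecidableEq κ] (w : ℓ^∞(ι, 𝕜)) (g : ι ↪ κ) (k : ι) :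
    weightedComp w g (lp.single 2 (g k) 1) = w k • lp.single 2 k 1 := by
  ext m
  rcases eq_or_ne m k with rfl | hmk
  · simp [weightedComp_apply]
  · simp [weightedComp_apply, hmk]

theorem weightedComp_single_of_notMem_range [DecidableEq κ] (w : ℓ^∞(ι, 𝕜)) (g : ι ↪ κ) {k : κ}
    (hk : k ∉ Set.range g) : weightedComp w g (lp.single 2 k 1) = 0 := by
  ext m
  have hmk : g m ≠ k := fun h => hk ⟨m, h⟩
  simp [weightedComp_apply, hmk]

theorem adjoint_weightedComp_single [DecidableEq ι] [DecidableEq κ] (w : ℓ^∞(ι, 𝕜)) (g : ι ↪ κ)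
    (k : ι) :
    ContinuousLinearMap.adjoint (weightedComp w g) (lp.single 2 k 1) =
      conj (w k) • lp.single 2 (g k) 1 := by
  refine ext_inner_left 𝕜 fun x => ?_
  rw [ContinuousLinearMap.adjoint_inner_right, inner_smul_right, lp.inner_single_right,
    lp.inner_single_right, weightedComp_apply]
  simp

theorem star_weightedComp_single [DecidableEq ι] (w : ℓ^∞(ι, 𝕜)) (g : ι ↪ ι) (k : ι) :
    star (weightedComp w g) (lp.single 2 k 1) = conj (w k) • lp.single 2 (g k) 1 :=
  adjoint_weightedComp_single w g k

theorem continuousLinearMap_ext_single [DecidableEq ι] {F : Type*} [AddCommMonoid F] [Module 𝕜 F]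
    [TopologicalSpace F] [T2Space F] {S T : ℓ²(ι, 𝕜) →L[𝕜] F}
    (h : ∀ k, S (lp.single 2 k 1) = T (lp.single 2 k 1)) : S = T :=
  lp.ext_continuousLinearMap (by simp) fun k => ContinuousLinearMap.ext_ring (h k)

theorem weightedComp_mul_weightedComp_eq_smul {v w : ℓ^∞(ι, 𝕜)} {g h : ι ↪ ι} {c : 𝕜}
    (hgh : ∀ m, g (h m) = h (g m)) (hvw : ∀ m, v m * w (h m) = c * (w m * v (g m))) :
    weightedComp v h * weightedComp w g = c • (weightedComp w g * weightedComp v h) := by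
  ext x m
  change v m * (w (h m) * x (g (h m))) = c * (w m * (v (g m) * x (h (g m))))
  rw [hgh]
  linear_combination x (h (g m)) * hvw m

theorem weightedComp_mul_star_weightedComp_eq_smul {v w : ℓ^∞(ι, 𝕜)} {g h : ι ↪ ι} {c : 𝕜}
    (hgh : ∀ m, g (h m) = h (g m)) (hrange : ∀ k, g k ∈ Set.range h → k ∈ Set.range h)
    (hvw : ∀ m, v (g m) * conj (w (h m)) = c * (conj (w m) * v m)) :
    weightedComp v h * star (weightedComp w g) =
      c • (star (weightedComp w g) * weightedComp v h) := by
  classical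
  refine continuousLinearMap_ext_single fun k => ?_
  simp only [smul_apply, mul_apply_eq_comp, star_weightedComp_single, map_smul]
  by_cases hk : k ∈ Set.range h
  · obtain ⟨m, rfl⟩ := hk
    simp only [hgh, weightedComp_single, map_smul, star_weightedComp_single, smul_smul]
    congr 1
    linear_combination hvw m
  · rw [weightedComp_single_of_notMem_range v h hk,
      weightedComp_single_of_notMem_range v h (mt (hrange k) hk), map_zero, smul_zero, smul_zero]

theorem weightedComp_mul_star_self_single [DecidableEq ι] (w : ℓ^∞(ι, 𝕜)) (g : ι ↪ ι) (k : ι) :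
    (weightedComp w g * star (weightedComp w g)) (lp.single 2 k 1) =
      (conj (w k) * w k) • lp.single 2 k 1 := by
  rw [mul_apply_eq_comp, star_weightedComp_single, map_smul, weightedComp_single, smul_smul]

theorem star_weightedComp_mul_self_single [DecidableEq ι] (w : ℓ^∞(ι, 𝕜)) (g : ι ↪ ι) (k : ι) :
    (star (weightedComp w g) * weightedComp w g) (lp.single 2 (g k) 1) =
      (conj (w k) * w k) • lp.single 2 (g k) 1 := by
  rw [mul_apply_eq_comp, weightedComp_single, map_smul, star_weightedComp_single, smul_smul,
    mul_comm]

end WeightedComposition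

section MultiIndex

variable {n : ℕ}

/-- The sum of the coordinates of `k` not before `i`. With coordinates numbered from `0` this is
the exponent `k_{i+1} + ⋯ + k_n` of the paper, where `i` ranges over `0, …, n`. -/
def tailSum (i : Fin (n + 1)) (k : Fin n → ℕ) : ℕ :=
  ∑ j with i ≤ j.castSucc, k j

theorem tailSum_zero (k : Fin n → ℕ) : tailSum 0 k = ∑ j, k j := by
  simp [tailSum]

theorem tailSum_succ (i : Fin n) (k : Fin n → ℕ) : tailSum i.succ k = ∑ j with i < j, k j := by
  simp only [tailSum, Fin.succ_le_castSucc_iff]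

theorem tailSum_last (k : Fin n → ℕ) : tailSum (Fin.last n) k = 0 := by
  simp [tailSum, Fin.last_le_iff, Fin.castSucc_ne_last]

theorem tailSum_castSucc (i : Fin n) (k : Fin n → ℕ) :
    tailSum i.castSucc k = k i + tailSum i.succ k := by
  have hfilter : ({j | i ≤ j} : Finset (Fin n)) = insert i ({j | i < j} : Finset (Fin n)) := by
    ext j
    simp [le_iff_eq_or_lt, eq_comm]
  rw [tailSum_succ, ← Finset.sum_insert (by simp), ← hfilter]
  simp [tailSum]

theorem tailSum_add_single (i : Fin (n + 1)) (j : Fin n) (k : Fin n → ℕ) :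
    tailSum i (k + Pi.single j 1) = tailSum i k + if i ≤ j.castSucc then 1 else 0 := by
  simp [tailSum, Finset.sum_add_distrib, Pi.single_apply]

theorem exists_add_single_eq_iff {j : Fin n} {k : Fin n → ℕ} :
    (∃ m : Fin n → ℕ, m + Pi.single j 1 = k) ↔ k j ≠ 0 := by
  refine ⟨?_, fun hk => ⟨k - Pi.single j 1, tsub_add_cancel_of_le ?_⟩⟩
  · rintro ⟨m, rfl⟩
    simp
  · intro l
    rcases eq_or_ne l j with rfl | hl
    · simpa using Nat.one_le_iff_ne_zero.mpr hk
    · simp [hl]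

end MultiIndex

section Generators

open scoped lp ENNReal ComplexConjugate

variable {n : ℕ} {p : ℝ} {lam : ℂ}

theorem sq_sqrt_one_sub_pow_two_mul (hp : |p| ≤ 1) (m : ℕ) :
    √(1 - p ^ (2 * m)) ^ 2 = 1 - p ^ (2 * m) := by
  refine Real.sq_sqrt (sub_nonneg.mpr ?_)
  rw [pow_mul]
  exact pow_le_one₀ (sq_nonneg p) ((sq_le_one_iff_abs_le_one p).mpr hp)

/-- The index shift of the generators, numbered from `0`: the adjoint of `X₁` preserves each basis
vector up to a scalar, and that of `X_{j+2}` raises the coordinate `j` by one. -/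
def sphereShift (i : Fin (n + 1)) : Fin n → ℕ :=
  Fin.cases 0 (fun j => Pi.single j 1) i

/-- The weights of the generators, numbered from `0` and with `p = q⁻¹`: the matrix coefficient of
`X_{i+1}` taking the basis vector at `k + sphereShift i` to the one at `k`. -/
noncomputable def sphereWeight (p : ℝ) (lam : ℂ) (i : Fin (n + 1)) (k : Fin n → ℕ) : ℂ :=
  Fin.cases lam (fun j => (√(1 - p ^ (2 * (k j + 1))) : ℂ)) i * (p : ℂ) ^ tailSum i k

theorem sphereWeight_add_sphereShift_of_lt {i j : Fin (n + 1)} (hij : i < j) (k : Fin n → ℕ) :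
    sphereWeight p lam i (k + sphereShift j) = p * sphereWeight p lam i k := by
  obtain ⟨b, rfl⟩ := Fin.exists_succ_eq.mpr (Fin.ne_zero_of_lt hij)
  have hib : i ≤ b.castSucc := Fin.le_castSucc_iff.mpr hij
  cases i using Fin.cases with
  | zero =>
    simp only [sphereWeight, sphereShift, Fin.cases_zero, Fin.cases_succ, tailSum_add_single, hib,
      ite_true]
    ring
  | succ a =>
    have hab : a ≠ b := (Fin.succ_lt_succ_iff.mp hij).ne
    simp only [sphereWeight, sphereShift, Fin.cases_succ, tailSum_add_single, hib,
      ite_true, Pi.add_apply, Pi.single_eq_of_ne hab, add_zero]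
    ring

theorem sphereWeight_add_sphereShift_of_gt {i j : Fin (n + 1)} (hij : j < i) (k : Fin n → ℕ) :
    sphereWeight p lam i (k + sphereShift j) = sphereWeight p lam i k := by
  obtain ⟨a, rfl⟩ := Fin.exists_succ_eq.mpr (Fin.ne_zero_of_lt hij)
  cases j using Fin.cases with
  | zero => simp [sphereShift]
  | succ b =>
    have hba : b < a := Fin.succ_lt_succ_iff.mp hij
    have htail : ¬ a.succ ≤ b.castSucc := by simpa [Fin.succ_le_castSucc_iff] using hba.le
    simp [sphereWeight, sphereShift, tailSum_add_single, htail, Pi.single_eq_of_ne hba.ne']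

theorem conj_sphereWeight_zero_mul_self (hlam : ‖lam‖ = 1) (k : Fin n → ℕ) :
    conj (sphereWeight p lam 0 k) * sphereWeight p lam 0 k = (p : ℂ) ^ (2 * tailSum 0 k) := by
  have hconj : conj lam * lam = 1 := by simp [Complex.conj_mul', hlam]
  simp only [sphereWeight, Fin.cases_zero, map_mul, map_pow, Complex.conj_ofReal]
  linear_combination (p : ℂ) ^ (2 * tailSum 0 k) * hconj

theorem conj_sphereWeight_succ_mul_self (hp : |p| ≤ 1) (i : Fin n) (k : Fin n → ℕ) :
    conj (sphereWeight p lam i.succ k) * sphereWeight p lam i.succ k =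
      (1 - (p : ℂ) ^ (2 * (k i + 1))) * (p : ℂ) ^ (2 * tailSum i.succ k) := by
  have hsq : (√(1 - p ^ (2 * (k i + 1))) : ℂ) ^ 2 = 1 - (p : ℂ) ^ (2 * (k i + 1)) :=
    mod_cast sq_sqrt_one_sub_pow_two_mul hp (k i + 1)
  simp only [sphereWeight, Fin.cases_succ, map_mul, map_pow, Complex.conj_ofReal]
  linear_combination (p : ℂ) ^ (2 * tailSum i.succ k) * hsq

theorem norm_sphereWeight_le (hp : |p| ≤ 1) (lam : ℂ) (i : Fin (n + 1)) (k : Fin n → ℕ) :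
    ‖sphereWeight p lam i k‖ ≤ max ‖lam‖ 1 := by
  have hpow : ‖(p : ℂ) ^ tailSum i k‖ ≤ 1 := by
    simpa using pow_le_one₀ (abs_nonneg p) hp
  rw [sphereWeight, norm_mul]
  refine (mul_le_of_le_one_right (norm_nonneg _) hpow).trans ?_
  cases i using Fin.cases with
  | zero => exact le_max_left _ _
  | succ a =>
    refine le_max_of_le_right ?_
    simpa [abs_of_nonneg (Real.sqrt_nonneg _), Real.sqrt_le_one] using
      (even_two_mul (k a + 1)).pow_nonneg p

theorem memℓp_sphereWeight (hp : |p| ≤ 1) (lam : ℂ) (i : Fin (n + 1)) :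
    Memℓp (sphereWeight p lam i) ∞ :=
  memℓp_infty ⟨max ‖lam‖ 1, Set.forall_mem_range.mpr (norm_sphereWeight_le hp lam i)⟩

/-- The operator `X_{i+1}` of the representation, with `p = q⁻¹`. -/
noncomputable def sphereGen (hp : |p| ≤ 1) (lam : ℂ) (i : Fin (n + 1)) :
    ℓ²(Fin n → ℕ, ℂ) →L[ℂ] ℓ²(Fin n → ℕ, ℂ) :=
  weightedComp ⟨sphereWeight p lam i, memℓp_sphereWeight hp lam i⟩
    (addRightEmbedding (sphereShift i))

theorem sphereGen_eVec_add_sphereShift (hp : |p| ≤ 1) (i : Fin (n + 1)) (k : Fin n → ℕ) :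
    sphereGen hp lam i (eVec n (k + sphereShift i)) = sphereWeight p lam i k • eVec n k :=
  weightedComp_single _ (addRightEmbedding (sphereShift i)) k

theorem sphereGen_succ_eVec_of_eq_zero (hp : |p| ≤ 1) {i : Fin n} {k : Fin n → ℕ}
    (hk : k i = 0) : sphereGen hp lam i.succ (eVec n k) = 0 :=
  weightedComp_single_of_notMem_range _ _ fun h => exists_add_single_eq_iff.mp h hk

theorem sphereGen_zero_eVec (hp : |p| ≤ 1) (k : Fin n → ℕ) :
    sphereGen hp lam 0 (eVec n k) = (lam * (p : ℂ) ^ ∑ j, k j) • eVec n k := by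
  have h := sphereGen_eVec_add_sphereShift (lam := lam) hp 0 k
  rwa [sphereWeight, tailSum_zero] at h

theorem sphereGen_succ_eVec (hp : |p| ≤ 1) (i : Fin n) (k : Fin n → ℕ) :
    sphereGen hp lam i.succ (eVec n k) =
      ((√(1 - p ^ (2 * k i)) : ℂ) * (p : ℂ) ^ ∑ j with i < j, k j) •
        eVec n (Function.update k i (k i - 1)) := by
  by_cases hk : k i = 0
  · simp [sphereGen_succ_eVec_of_eq_zero hp hk, hk]
  obtain ⟨m, rfl⟩ := exists_add_single_eq_iff.mpr hk
  have hupdate : Function.update (m + Pi.single i 1 : Fin n → ℕ) i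
      ((m + Pi.single i 1 : Fin n → ℕ) i - 1) = m := by
    ext j
    rcases eq_or_ne j i with rfl | hj <;> simp [*]
  have h := sphereGen_eVec_add_sphereShift (lam := lam) hp i.succ m
  rw [hupdate, ← tailSum_succ, tailSum_add_single, if_neg (by simp [Fin.succ_le_castSucc_iff])]
  simpa [sphereWeight, sphereShift] using h

theorem sphereGen_mul_of_lt (hp : |p| ≤ 1) {i j : Fin (n + 1)} (hij : i < j) :
    sphereGen hp lam j * sphereGen hp lam i =
      (p : ℂ) • (sphereGen hp lam i * sphereGen hp lam j) := by
  refine weightedComp_mul_weightedComp_eq_smul (fun m => add_right_comm _ _ _) fun m => ?_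
  change sphereWeight p lam j m * sphereWeight p lam i (m + sphereShift j) =
    p * (sphereWeight p lam i m * sphereWeight p lam j (m + sphereShift i))
  rw [sphereWeight_add_sphereShift_of_lt hij, sphereWeight_add_sphereShift_of_gt hij]
  ring

theorem sphereGen_mul_star_of_lt (hp : |p| ≤ 1) {i j : Fin (n + 1)} (hij : i < j) :
    sphereGen hp lam j * star (sphereGen hp lam i) =
      (p : ℂ) • (star (sphereGen hp lam i) * sphereGen hp lam j) := by
  refine weightedComp_mul_star_weightedComp_eq_smul (fun m => add_right_comm _ _ _) ?_ fun m => ?_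
  · obtain ⟨b, rfl⟩ := Fin.exists_succ_eq.mpr (Fin.ne_zero_of_lt hij)
    have hib : (sphereShift i : Fin n → ℕ) b = 0 := by
      cases i using Fin.cases with
      | zero => rfl
      | succ a => exact Pi.single_eq_of_ne (Fin.succ_lt_succ_iff.mp hij).ne' 1
    intro k hk
    refine exists_add_single_eq_iff.mpr ?_
    simpa [hib] using exists_add_single_eq_iff.mp hk
  · change sphereWeight p lam j (m + sphereShift i) *
      conj (sphereWeight p lam i (m + sphereShift j)) =
        p * (conj (sphereWeight p lam i m) * sphereWeight p lam j m)
    rw [sphereWeight_add_sphereShift_of_lt hij, sphereWeight_add_sphereShift_of_gt hij, map_mul,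
      Complex.conj_ofReal]
    ring

theorem sphereGen_mul_star_of_ne (hp : |p| ≤ 1) {i j : Fin (n + 1)} (hij : i ≠ j) :
    sphereGen hp lam j * star (sphereGen hp lam i) =
      (p : ℂ) • (star (sphereGen hp lam i) * sphereGen hp lam j) := by
  rcases hij.lt_or_gt with h | h
  · exact sphereGen_mul_star_of_lt hp h
  · simpa using congrArg star (sphereGen_mul_star_of_lt (lam := lam) hp h)

theorem sphereGen_mul_star_eVec (hp : |p| ≤ 1) (i : Fin (n + 1)) (k : Fin n → ℕ) :
    (sphereGen hp lam i * star (sphereGen hp lam i)) (eVec n k) =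
      (conj (sphereWeight p lam i k) * sphereWeight p lam i k) • eVec n k :=
  weightedComp_mul_star_self_single _ _ k

theorem star_mul_sphereGen_eVec_add_sphereShift (hp : |p| ≤ 1) (i : Fin (n + 1))
    (k : Fin n → ℕ) :
    (star (sphereGen hp lam i) * sphereGen hp lam i) (eVec n (k + sphereShift i)) =
      (conj (sphereWeight p lam i k) * sphereWeight p lam i k) • eVec n (k + sphereShift i) :=
  star_weightedComp_mul_self_single _ (addRightEmbedding (sphereShift i)) k

theorem sphereGen_succ_mul_star_eVec (hp : |p| ≤ 1) (i : Fin n) (k : Fin n → ℕ) :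
    (sphereGen hp lam i.succ * star (sphereGen hp lam i.succ)) (eVec n k) =
      ((1 - (p : ℂ) ^ (2 * (k i + 1))) * (p : ℂ) ^ (2 * tailSum i.succ k)) • eVec n k := by
  rw [sphereGen_mul_star_eVec, conj_sphereWeight_succ_mul_self hp]

theorem star_mul_sphereGen_succ_eVec (hp : |p| ≤ 1) (i : Fin n) (k : Fin n → ℕ) :
    (star (sphereGen hp lam i.succ) * sphereGen hp lam i.succ) (eVec n k) =
      ((1 - (p : ℂ) ^ (2 * k i)) * (p : ℂ) ^ (2 * tailSum i.succ k)) • eVec n k := by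
  by_cases hk : k i = 0
  · simp [mul_apply_eq_comp, sphereGen_succ_eVec_of_eq_zero hp hk, hk]
  obtain ⟨m, rfl⟩ := exists_add_single_eq_iff.mpr hk
  have h := star_mul_sphereGen_eVec_add_sphereShift (lam := lam) hp i.succ m
  rw [conj_sphereWeight_succ_mul_self hp] at h
  rw [tailSum_add_single, if_neg (by simp [Fin.succ_le_castSucc_iff]), Pi.add_apply,
    Pi.single_eq_same, add_zero]
  exact h

/-- The generators as a sequence `X₁, …, X_{n+1}`, extended by zero. -/
noncomputable def sphereGenSeq (n : ℕ) (hp : |p| ≤ 1) (lam : ℂ) :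
    ℕ → ℓ²(Fin n → ℕ, ℂ) →L[ℂ] ℓ²(Fin n → ℕ, ℂ)
  | 0 => 0
  | i + 1 => if h : i < n + 1 then sphereGen hp lam ⟨i, h⟩ else 0

theorem sphereGenSeq_succ (hp : |p| ≤ 1) (i : Fin (n + 1)) :
    sphereGenSeq n hp lam (i + 1) = sphereGen hp lam i :=
  dif_pos i.isLt

theorem sphereGenSeq_one (hp : |p| ≤ 1) : sphereGenSeq n hp lam 1 = sphereGen hp lam 0 :=
  sphereGenSeq_succ hp 0

theorem sphereGenSeq_add_two (hp : |p| ≤ 1) (i : Fin n) :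
    sphereGenSeq n hp lam (i + 2) = sphereGen hp lam i.succ :=
  sphereGenSeq_succ hp i.succ

theorem sOdd_sphereGenSeq_eVec (hp : |p| ≤ 1) (hlam : ‖lam‖ = 1) (i : Fin (n + 1))
    (k : Fin n → ℕ) :
    sOdd (sphereGenSeq n hp lam) (i + 1) (eVec n k) = (p : ℂ) ^ (2 * tailSum i k) • eVec n k := by
  induction i using Fin.induction with
  | zero =>
    have h := star_mul_sphereGen_eVec_add_sphereShift (lam := lam) hp 0 k
    rw [conj_sphereWeight_zero_mul_self hlam] at h
    rw [sOdd, sphereGenSeq_succ, Fin.val_zero, sOdd, zero_add]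
    exact h
  | succ i ih =>
    rw [sOdd, sphereGenSeq_succ, add_apply, star_mul_sphereGen_succ_eVec, Fin.val_succ,
      ← Fin.val_castSucc i, ih, tailSum_castSucc, ← add_smul]
    congr 1
    ring

theorem sphereGen_zero_mul_star (hp : |p| ≤ 1) :
    sphereGen (n := n) hp lam 0 * star (sphereGen hp lam 0) =
      star (sphereGen hp lam 0) * sphereGen hp lam 0 :=
  continuousLinearMap_ext_single fun k => (sphereGen_mul_star_eVec hp 0 k).trans
    (star_mul_sphereGen_eVec_add_sphereShift hp 0 k).symm

theorem sphereGen_succ_mul_star_sub (hp : |p| ≤ 1) (hlam : ‖lam‖ = 1) (i : Fin n) :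
    sphereGen hp lam i.succ * star (sphereGen hp lam i.succ) -
        star (sphereGen hp lam i.succ) * sphereGen hp lam i.succ =
      (1 - (p : ℂ) ^ 2) • sOdd (sphereGenSeq n hp lam) (i + 1) := by
  refine continuousLinearMap_ext_single fun k => ?_
  change _ = (1 - (p : ℂ) ^ 2) • sOdd (sphereGenSeq n hp lam) (i.castSucc + 1) (eVec n k)
  rw [sOdd_sphereGenSeq_eVec hp hlam, tailSum_castSucc, sub_apply, ← eVec,
    sphereGen_succ_mul_star_eVec, star_mul_sphereGen_succ_eVec, ← sub_smul, smul_smul]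
  congr 1
  ring

theorem sOdd_sphereGenSeq_last (hp : |p| ≤ 1) (hlam : ‖lam‖ = 1) :
    sOdd (sphereGenSeq n hp lam) (n + 1) = 1 := by
  refine continuousLinearMap_ext_single fun k => ?_
  have h := sOdd_sphereGenSeq_eVec hp hlam (Fin.last n) k
  rwa [tailSum_last, mul_zero, pow_zero, one_smul] at h

end Generators

theorem exists_fin_add_one_eq {n i : ℕ} (hi : 1 ≤ i) (hin : i ≤ n + 1) :
    ∃ j : Fin (n + 1), (j : ℕ) + 1 = i :=
  ⟨⟨i - 1, by omega⟩, Nat.sub_add_cancel hi⟩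

/-- The formulas of the irreducible representation `ψ^{(2n+1)}_λ` of `S^{2n+1}_q` define
bounded operators `X₁, …, X_{n+1}` on `ℓ²(ℕⁿ)` satisfying the `S^{2n+1}_q` relations. -/
theorem oddSphere_representation (q : ℝ) (hq : 1 < |q|) (n : ℕ) (hn : 1 ≤ n)
    (lam : ℂ) (hlam : ‖lam‖ = 1) :
    ∃ X : ℕ → (lp (fun _ : Fin n → ℕ => ℂ) 2 →L[ℂ] lp (fun _ : Fin n → ℕ => ℂ) 2),
      (∀ k : Fin n → ℕ,
        X 1 (eVec n k) = (lam * (((q ^ (∑ j, k j))⁻¹ : ℝ) : ℂ)) • eVec n k) ∧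
      (∀ i : Fin n, ∀ k : Fin n → ℕ,
        X ((i : ℕ) + 2) (eVec n k) =
          (((Real.sqrt (1 - (q ^ (2 * k i))⁻¹) *
            (q ^ (∑ j ∈ Finset.univ.filter fun j => i < j, k j))⁻¹ : ℝ)) : ℂ) •
            eVec n (Function.update k i (k i - 1))) ∧
      (∀ i j : ℕ, 1 ≤ i → i < j → j ≤ n + 1 → X i * X j = (q : ℂ) • (X j * X i)) ∧
      (∀ i j : ℕ, 1 ≤ i → i ≤ n + 1 → 1 ≤ j → j ≤ n + 1 → i ≠ j →
        star (X i) * X j = (q : ℂ) • (X j * star (X i))) ∧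
      X 1 * star (X 1) = star (X 1) * X 1 ∧
      (∀ i : ℕ, 2 ≤ i → i ≤ n + 1 →
        X i * star (X i) - star (X i) * X i = (1 - ((q : ℂ) ^ 2)⁻¹) • sOdd X (i - 1)) ∧
      sOdd X (n + 1) = 1 := by
  have hq0 : (q : ℂ) ≠ 0 := mod_cast abs_pos.mp (one_pos.trans hq)
  have hp : |q⁻¹| ≤ 1 := by rw [abs_inv]; exact inv_le_one_of_one_le₀ hq.le
  refine ⟨sphereGenSeq n hp lam, fun k => ?_, fun i k => ?_, fun i j hi hij hj => ?_,
    fun i j hi hin hj hjn hij => ?_, ?_, fun i hi hin => ?_, sOdd_sphereGenSeq_last hp hlam⟩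
  · simpa [sphereGenSeq_one] using sphereGen_zero_eVec hp k
  · simpa [sphereGenSeq_add_two] using sphereGen_succ_eVec hp i k
  · obtain ⟨i, rfl⟩ := exists_fin_add_one_eq hi (hij.le.trans hj)
    obtain ⟨j, rfl⟩ := exists_fin_add_one_eq (hi.trans hij.le) hj
    rw [sphereGenSeq_succ, sphereGenSeq_succ]
    exact ((eq_inv_smul_iff₀ hq0).mp
      (by simpa using sphereGen_mul_of_lt hp (by simpa using hij))).symm
  · obtain ⟨i, rfl⟩ := exists_fin_add_one_eq hi hin
    obtain ⟨j, rfl⟩ := exists_fin_add_one_eq hj hjn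
    rw [sphereGenSeq_succ, sphereGenSeq_succ]
    exact ((eq_inv_smul_iff₀ hq0).mp
      (by simpa using sphereGen_mul_star_of_ne hp (by rintro rfl; exact hij rfl))).symm
  · simpa [sphereGenSeq_one] using sphereGen_zero_mul_star hp
  · obtain ⟨i, rfl⟩ : ∃ j : Fin n, (j : ℕ) + 2 = i := ⟨⟨i - 2, by omega⟩, Nat.sub_add_cancel hi⟩
    simpa [sphereGenSeq_add_two] using sphereGen_succ_mul_star_sub hp hlam i
end

section
/- Let A be a unital complex algebra, q a nonzero real number, and x₀, x₁, …, x_n ∈ A. Define recursively the 2^k × 2^k matrices u_{(2k)} over A by u_{(0)} = x₀ and u_{(2k)} = [[q⁻¹ u_{(2k−2)}, x_k·1], [x_k*·1, −u_{(2k−2)}]]. Then the matrix trace satisfies tr(u_{(2n)}) = (q⁻¹ − 1)ⁿ x₀; consequently tr(e_{(2n)}) = 2^{n−1} + (1/2)(q⁻¹ − 1)ⁿ x₀ for the idempotent e_{(2n)} = (1 + u_{(2n)})/2. -/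
section Trace

variable {m n R A : Type*} [Fintype m] [Fintype n]

theorem trace_reindex_self [AddCommMonoid A] (e : m ≃ n) (M : Matrix m m A) :
    (Matrix.reindex e e M).trace = M.trace :=
  e.symm.sum_comp M.diag

theorem trace_fromBlocks [AddCommMonoid A] (P : Matrix m m A) (Q : Matrix m n A)
    (S : Matrix n m A) (T : Matrix n n A) :
    (Matrix.fromBlocks P Q S T).trace = P.trace + T.trace :=
  Fintype.sum_sum_type _

theorem trace_smul_one_add [DecidableEq n] [CommSemiring R] [Semiring A] [Algebra R A] (c : R)
    (M : Matrix n n A) :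
    (c • (1 + M)).trace = (c * Fintype.card n) • (1 : A) + c • M.trace := by
  rw [Matrix.trace_smul, Matrix.trace_add, Matrix.trace_one, smul_add, mul_smul,
    ← Algebra.algebraMap_eq_smul_one (Fintype.card n : R), map_natCast]

end Trace

section Unipotent

variable {A : Type*} [Ring A] [Algebra ℂ A] [StarRing A] (q : ℝ) (x : ℕ → A)

theorem trace_uMat_zero : (uMat q x 0).trace = x 0 :=
  Matrix.trace_fin_one _

theorem trace_uMat_succ (k : ℕ) :
    (uMat q x (k + 1)).trace = ((q : ℂ)⁻¹ - 1) • (uMat q x k).trace := by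
  rw [uMat, trace_reindex_self, trace_fromBlocks, Matrix.trace_smul, Matrix.trace_neg,
    ← sub_eq_add_neg, sub_smul, one_smul]

theorem trace_uMat_eq_pow_smul (k : ℕ) :
    (uMat q x k).trace = ((q : ℂ)⁻¹ - 1) ^ k • x 0 := by
  induction k with
  | zero => rw [trace_uMat_zero, pow_zero, one_smul]
  | succ k ih => rw [trace_uMat_succ, ih, smul_smul, ← pow_succ']

end Unipotent

theorem uMat_trace_general {A : Type*} [Ring A] [Algebra ℂ A] [StarRing A]
    (q : ℝ) (hq : q ≠ 0) (n : ℕ) (hn : 1 ≤ n) (x : ℕ → A) :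
    Matrix.trace (uMat q x n) = (((q : ℂ)⁻¹ - 1) ^ n) • x 0 ∧
    Matrix.trace ((2 : ℂ)⁻¹ • ((1 : Matrix (Fin (2 ^ n)) (Fin (2 ^ n)) A) + uMat q x n)) =
      ((2 : ℂ) ^ (n - 1)) • (1 : A) + ((2 : ℂ)⁻¹ * ((q : ℂ)⁻¹ - 1) ^ n) • x 0 := by
  have half_size : (2 : ℂ)⁻¹ * Fintype.card (Fin (2 ^ n)) = 2 ^ (n - 1) := by
    rw [Fintype.card_fin, Nat.cast_pow, Nat.cast_ofNat, inv_mul_eq_iff_eq_mul₀ two_ne_zero,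
      mul_pow_sub_one (Nat.one_le_iff_ne_zero.mp hn)]
  refine ⟨trace_uMat_eq_pow_smul q x n, ?_⟩
  rw [trace_smul_one_add, half_size, trace_uMat_eq_pow_smul, smul_smul]

/-- The matrix trace of the unipotent satisfies `tr(u_{(2n)}) = (q⁻¹ - 1)ⁿ x₀`, and hence
the idempotent `e_{(2n)} = (1 + u_{(2n)})/2` has matrix trace
`2^{n-1} + ½ (q⁻¹ - 1)ⁿ x₀`. -/
theorem uMat_trace {A : Type*} [Ring A] [Algebra ℂ A] [StarRing A] [StarModule ℂ A]
    (q : ℝ) (hq : q ≠ 0) (n : ℕ) (hn : 1 ≤ n) (x : ℕ → A) :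
    Matrix.trace (uMat q x n) = (((q : ℂ)⁻¹ - 1) ^ n) • x 0 ∧
    Matrix.trace ((2 : ℂ)⁻¹ • ((1 : Matrix (Fin (2 ^ n)) (Fin (2 ^ n)) A) + uMat q x n)) =
      ((2 : ℂ) ^ (n - 1)) • (1 : A) + ((2 : ℂ)⁻¹ * ((q : ℂ)⁻¹ - 1) ^ n) • x 0 :=
  uMat_trace_general q hq n hn x
end

section
/- Let A be a unital complex *-algebra, q a nonzero real number, and x₁, …, x_{n+1} ∈ A elements satisfying the S^{2n+1}_q relations: x_i x_j = q x_j x_i for 1 ≤ i < j ≤ n+1; x_i* x_j = q x_j x_i* for i ≠ j; x_i x_i* − x_i* x_i = (1 − q⁻²) s_{i−1} for i = 1, …, n+1 (with s₀ := 0, s_i := s_{i−1} + x_i* x_i); and s_{n+1} = 1. Define recursively the 2^k × 2^k matrices V_{(2k+1)} over A by V_{(1)} = x₁ and V_{(2k+1)} = [[x_{k+1}·1, q⁻¹ V_{(2k−1)}], [−V_{(2k−1)}*, x_{k+1}*·1]]. Then V_{(2n+1)} is unitary: V_{(2n+1)} V_{(2n+1)}* = V_{(2n+1)}* V_{(2n+1)}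 = 1. -/
/-- The defining relations of the odd quantum Euclidean sphere `S^{2n+1}_q` on elements
`x₁, …, x_{n+1}`. -/
def OddSphereRel {A : Type*} [Ring A] [Algebra ℂ A] [StarRing A]
    (q : ℝ) (n : ℕ) (x : ℕ → A) : Prop :=
  (∀ i j : ℕ, 1 ≤ i → i < j → j ≤ n + 1 → x i * x j = (q : ℂ) • (x j * x i)) ∧
  (∀ i j : ℕ, 1 ≤ i → i ≤ n + 1 → 1 ≤ j → j ≤ n + 1 → i ≠ j →
    star (x i) * x j = (q : ℂ) • (x j * star (x i))) ∧
  (∀ i : ℕ, 1 ≤ i → i ≤ n + 1 →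
    x i * star (x i) - star (x i) * x i = (1 - ((q : ℂ) ^ 2)⁻¹) • sOdd x (i - 1)) ∧
  sOdd x (n + 1) = 1

/-- The recursively defined matrices `V_{(2k+1)}`: `V_{(1)} = x₁` and
`V_{(2k+1)} = [[x_{k+1}·1, q⁻¹ V_{(2k-1)}], [-V_{(2k-1)}*, x_{k+1}*·1]]`. -/
noncomputable def vMat {A : Type*} [Ring A] [Algebra ℂ A] [StarRing A] (q : ℝ) (x : ℕ → A) :
    (k : ℕ) → Matrix (Fin (2 ^ k)) (Fin (2 ^ k)) A
  | 0 => Matrix.of fun _ _ => x 1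
  | k + 1 =>
    Matrix.reindex (finSumFinEquiv.trans (finCongr (by rw [pow_succ, mul_two])))
      (finSumFinEquiv.trans (finCongr (by rw [pow_succ, mul_two])))
      (Matrix.fromBlocks (x (k + 2) • (1 : Matrix (Fin (2 ^ k)) (Fin (2 ^ k)) A))
        ((q : ℂ)⁻¹ • vMat q x k)
        (-(star (vMat q x k)))
        (star (x (k + 2)) • (1 : Matrix (Fin (2 ^ k)) (Fin (2 ^ k)) A)))

/-!
Write `V_k` for `V_{(2k+1)}`. By induction on `k`, `V_k V_k* = V_k* V_k = s_{k+1} · 1`; the sphere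
relation `s_{n+1} = 1` is only the last instance. In the inductive step put `y = x_{k+2}`. All
entries of `V_k` are linear in the `x_i` and `x_i*` with `i ≤ k + 1`, and these `q`-commute with
`y`, so the off-diagonal blocks of `V_{k+1} V_{k+1}*` and `V_{k+1}* V_{k+1}` cancel. The diagonal
blocks are `s_{k+1} + y* y` and `y y* + q⁻² s_{k+1}`, which agree because
`y y* - y* y = (1 - q⁻²) s_{k+1}`.
-/

open Matrix

/-- The elements `a` such that both `a` and `a*` commute with `y` up to the factor `c`. Imposing the
relation on `a*` as well makes this submodule closed under `star`. -/
def twistedCommutant {𝕜 R : Type*} [CommSemiring 𝕜] [StarRing 𝕜] [Semiring R] [StarRing R]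
    [Algebra 𝕜 R] [StarModule 𝕜 R] (c : 𝕜) (y : R) : Submodule 𝕜 R where
  carrier := {a | a * y = c • (y * a) ∧ star a * y = c • (y * star a)}
  zero_mem' := by simp
  add_mem' := by
    rintro a b ⟨ha, ha'⟩ ⟨hb, hb'⟩
    simp [add_mul, mul_add, ha, ha', hb, hb']
  smul_mem' := by
    rintro r a ⟨ha, ha'⟩
    simp [ha, ha', smul_comm c]

section TwistedCommutant

variable {𝕜 R m : Type*} [CommSemiring 𝕜] [StarRing 𝕜] [Semiring R] [StarRing R] [Algebra 𝕜 R]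
  [StarModule 𝕜 R] {c : 𝕜} {a y : R}

theorem mem_twistedCommutant :
    a ∈ twistedCommutant c y ↔ a * y = c • (y * a) ∧ star a * y = c • (y * star a) :=
  Iff.rfl

theorem star_mem_twistedCommutant (ha : a ∈ twistedCommutant c y) :
    star a ∈ twistedCommutant c y :=
  ⟨ha.2, by simpa only [star_star] using ha.1⟩

theorem star_mul_eq_smul_of_mem_twistedCommutant (hc : IsSelfAdjoint c)
    (ha : a ∈ twistedCommutant c y) : star y * a = c • (a * star y) := by
  simpa only [star_mul, star_smul, star_star, hc.star_eq] using congrArg star ha.2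

theorem mem_twistedCommutant_scalar [Fintype m] [DecidableEq m] {M : Matrix m m R}
    (hM : ∀ i j, M i j ∈ twistedCommutant c y) : M ∈ twistedCommutant c (scalar m y) := by
  refine mem_twistedCommutant.2 ⟨?_, ?_⟩ <;> ext i j
  · simpa using (hM i j).1
  · simpa [star_apply] using (hM j i).2

end TwistedCommutant

/-- `v` is a normal element of squared radius `r`, so that radius `1` means unitary. -/
def HasRadiusSq {R : Type*} [Mul R] [Star R] (v r : R) : Prop :=
  v * star v = r ∧ star v * v = r

theorem star_scalar {A m : Type*} [Semiring A] [StarRing A] [Fintype m] [DecidableEq m] (a : A) :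
    star (scalar m a) = scalar m (star a) :=
  diagonal_conjTranspose _

theorem HasRadiusSq.scalar {A : Type*} [Semiring A] [StarRing A] {v r : A} (h : HasRadiusSq v r)
    (m : Type*) [Fintype m] [DecidableEq m] : HasRadiusSq (scalar m v) (scalar m r) := by
  rw [HasRadiusSq, star_scalar, ← map_mul, ← map_mul, h.1, h.2]
  exact ⟨rfl, rfl⟩

theorem HasRadiusSq.reindex {A m n : Type*} [NonUnitalNonAssocSemiring A] [Star A] [Fintype m]
    [Fintype n] {V S : Matrix m m A} (h : HasRadiusSq V S) (e : m ≃ n) :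
    HasRadiusSq (Matrix.reindex e e V) (Matrix.reindex e e S) := by
  simp only [HasRadiusSq, reindex_apply, star_eq_conjTranspose, conjTranspose_submatrix,
    submatrix_mul_equiv] at h ⊢
  exact ⟨by rw [h.1], by rw [h.2]⟩

theorem HasRadiusSq.fromBlocks {𝕜 A m : Type*} [Field 𝕜] [StarRing 𝕜] [Ring A] [StarRing A]
    [Algebra 𝕜 A] [StarModule 𝕜 A] [Fintype m] [DecidableEq m] {q : 𝕜} (hq : q ≠ 0)
    (hq' : IsSelfAdjoint q) {V S Y : Matrix m m A} (hV : HasRadiusSq V S)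
    (hVY : V ∈ twistedCommutant q Y) (hY : Y * star Y - star Y * Y = (1 - (q ^ 2)⁻¹) • S) :
    HasRadiusSq (Matrix.fromBlocks Y (q⁻¹ • V) (-star V) (star Y))
      (Matrix.fromBlocks (S + star Y * Y) 0 0 (S + star Y * Y)) := by
  obtain ⟨hVV, hVV'⟩ := hV
  obtain ⟨hVy, hV'y⟩ := mem_twistedCommutant.1 hVY
  have hyV := star_mul_eq_smul_of_mem_twistedCommutant hq' hVY
  have hyV' := star_mul_eq_smul_of_mem_twistedCommutant hq' (star_mem_twistedCommutant hVY)
  have hdiag : Y * star Y + (q ^ 2)⁻¹ • S = S + star Y * Y := by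
    rw [sub_eq_iff_eq_add.1 hY, sub_smul, one_smul]
    abel
  have hstar : star (Matrix.fromBlocks Y (q⁻¹ • V) (-star V) (star Y)) =
      Matrix.fromBlocks (star Y) (-V) (q⁻¹ • star V) Y := by
    simp [star_eq_conjTranspose, fromBlocks_conjTranspose, hq'.star_eq]
  have hinv : q⁻¹ * q⁻¹ = (q ^ 2)⁻¹ := by rw [sq, mul_inv]
  rw [HasRadiusSq, hstar, fromBlocks_multiply, fromBlocks_multiply]
  refine ⟨fromBlocks_inj.2 ⟨?_, ?_, ?_, ?_⟩, fromBlocks_inj.2 ⟨?_, ?_, ?_, ?_⟩⟩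
  · rw [smul_mul_smul_comm, hVV, hinv, hdiag]
  · rw [smul_mul_assoc, hVy, inv_smul_smul₀ hq, mul_neg, neg_add_cancel]
  · rw [mul_smul_comm, hyV', inv_smul_smul₀ hq, neg_mul, neg_add_cancel]
  · rw [neg_mul_neg, hVV']
  · rw [neg_mul_neg, hVV, add_comm]
  · rw [mul_smul_comm, hyV, inv_smul_smul₀ hq, neg_mul, add_neg_cancel]
  · rw [smul_mul_assoc, hV'y, inv_smul_smul₀ hq, mul_neg, add_neg_cancel]
  · rw [smul_mul_smul_comm, hVV', hinv, add_comm, hdiag]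

theorem reindex_fromBlocks_scalar {A l m n : Type*} [Semiring A] [Fintype l] [Fintype m] [Fintype n]
    [DecidableEq l] [DecidableEq m] [DecidableEq n] (e : l ⊕ m ≃ n) (a : A) :
    reindex e e (fromBlocks (scalar l a) 0 0 (scalar m a)) = scalar n a := by
  simp [fromBlocks_diagonal, Function.comp_def]

section VMat

variable {A : Type*} [Ring A] [Algebra ℂ A] [StarRing A] {q : ℝ} {n : ℕ} {x : ℕ → A}

theorem vMat_zero (q : ℝ) (x : ℕ → A) : vMat q x 0 = scalar _ (x 1) := by
  ext a b
  obtain rfl : a = b := Subsingleton.elim (α := Fin 1) a b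
  simp [vMat]

theorem exists_vMat_succ_eq_reindex (q : ℝ) (x : ℕ → A) (k : ℕ) :
    ∃ e : Fin (2 ^ k) ⊕ Fin (2 ^ k) ≃ Fin (2 ^ (k + 1)), vMat q x (k + 1) = reindex e e
      (fromBlocks (scalar _ (x (k + 2))) ((q : ℂ)⁻¹ • vMat q x k) (-star (vMat q x k))
        (star (scalar _ (x (k + 2))))) := by
  refine ⟨finSumFinEquiv.trans (finCongr (by rw [pow_succ, mul_two])), ?_⟩
  rw [vMat, star_scalar, smul_one_eq_diagonal, smul_one_eq_diagonal, scalar_apply, scalar_apply]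

theorem vMat_apply_mem {S : Submodule ℂ A} (hS : ∀ a ∈ S, star a ∈ S) {k : ℕ}
    (hx : ∀ i, 1 ≤ i → i ≤ k + 1 → x i ∈ S) (a b : Fin (2 ^ k)) : vMat q x k a b ∈ S := by
  induction k with
  | zero => exact hx 1 le_rfl le_rfl
  | succ k ih =>
    have hV := ih fun i hi hik => hx i hi (by lia)
    have hscalar {y : A} (hy : y ∈ S) (i j : Fin (2 ^ k)) : scalar (Fin (2 ^ k)) y i j ∈ S := by
      by_cases hij : i = j <;> simp [hij, hy]
    have hlast : x (k + 2) ∈ S := hx (k + 2) (by lia) le_rfl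
    obtain ⟨e, he⟩ := exists_vMat_succ_eq_reindex q x k
    rw [he, reindex_apply, submatrix_apply, star_scalar]
    rcases e.symm a with i | i <;> rcases e.symm b with j | j
    · exact hscalar hlast i j
    · exact S.smul_mem _ (hV i j)
    · exact S.neg_mem (hS _ (hV j i))
    · exact hscalar (hS _ hlast) i j

theorem OddSphereRel.hasRadiusSq_first (h : OddSphereRel q n x) :
    HasRadiusSq (x 1) (sOdd x 1) := by
  have h₁ := h.2.2.1 1 le_rfl (by lia)
  simp only [sOdd, Nat.sub_self, smul_zero, sub_eq_zero] at h₁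
  simp [HasRadiusSq, sOdd, h₁]

theorem OddSphereRel.scalar_mul_star_sub (h : OddSphereRel q n x) {i : ℕ} (hi : i ≤ n)
    (m : Type*) [Fintype m] [DecidableEq m] :
    scalar m (x (i + 1)) * star (scalar m (x (i + 1))) -
      star (scalar m (x (i + 1))) * scalar m (x (i + 1)) =
        (1 - ((q : ℂ) ^ 2)⁻¹) • scalar m (sOdd x i) := by
  have hrel := h.2.2.1 (i + 1) (by lia) (by lia)
  rw [Nat.add_sub_cancel] at hrel
  rw [star_scalar, ← map_mul, ← map_mul, ← map_sub, hrel, scalar_apply, scalar_apply,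
    ← diagonal_smul]
  rfl

variable [StarModule ℂ A]

theorem OddSphereRel.mem_twistedCommutant (h : OddSphereRel q n x) {i j : ℕ} (hi : 1 ≤ i)
    (hij : i < j) (hj : j ≤ n + 1) : x i ∈ twistedCommutant (q : ℂ) (x j) :=
  ⟨h.1 i j hi hij hj, h.2.1 i j hi (by lia) (by lia) hj hij.ne⟩

theorem OddSphereRel.vMat_mem_twistedCommutant (h : OddSphereRel q n x) {k j : ℕ} (hkj : k + 1 < j)
    (hj : j ≤ n + 1) : vMat q x k ∈ twistedCommutant (q : ℂ) (scalar _ (x j)) :=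
  mem_twistedCommutant_scalar <| vMat_apply_mem (fun _ => star_mem_twistedCommutant)
    fun _ hi hik => h.mem_twistedCommutant hi (by lia) hj

theorem OddSphereRel.hasRadiusSq_vMat (h : OddSphereRel q n x) (hq : q ≠ 0) {k : ℕ} (hk : k ≤ n) :
    HasRadiusSq (vMat q x k) (scalar _ (sOdd x (k + 1))) := by
  induction k with
  | zero =>
    rw [vMat_zero]
    exact h.hasRadiusSq_first.scalar _
  | succ k ih =>
    have hradius := (ih (by lia)).fromBlocks (Complex.ofReal_ne_zero.2 hq)
      (Complex.conj_ofReal q) (h.vMat_mem_twistedCommutant (by lia) (by lia))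
      (h.scalar_mul_star_sub hk _)
    obtain ⟨e, he⟩ := exists_vMat_succ_eq_reindex q x k
    rw [star_scalar, ← map_mul, ← map_add, ← star_scalar] at hradius
    rw [he, ← reindex_fromBlocks_scalar e]
    exact hradius.reindex e

end VMat

/-- If `x₁, …, x_{n+1}` satisfy the `S^{2n+1}_q` relations, then the matrix `V_{(2n+1)}`
is unitary. -/
theorem vMat_unitary {A : Type*} [Ring A] [Algebra ℂ A] [StarRing A] [StarModule ℂ A]
    (q : ℝ) (hq : q ≠ 0) (n : ℕ) (hn : 1 ≤ n) (x : ℕ → A)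
    (hrel : OddSphereRel q n x) :
    vMat q x n * star (vMat q x n) = 1 ∧ star (vMat q x n) * vMat q x n = 1 := by
  have h := hrel.hasRadiusSq_vMat hq le_rfl
  rwa [hrel.2.2.2, map_one] at h
end

section
/- Let q ∈ ℝ with |q| > 1 and n ≥ 1. On H = ℓ²(ℤ × ℕⁿ) let D be the (unbounded) self-adjoint diagonal operator D e_{(k₀,k)} = k₀ e_{(k₀,k)} with its natural domain dom D = {v ∈ H : Σ k₀² |v_{(k₀,k)}|² < ∞}, and let X₁, …, X_{n+1} be the bounded operators of the representation Ψ of S^{2n+1}_q: X₁ e_{(k₀,k)} = q^{−(k₁+⋯+k_n)} e_{(k₀+1,k)} and X_i e_{(k₀,k)} = (1 − q^{−2k_{i−1}})^{1/2} q^{−(k_i+⋯+k_n)} e_{(k₀,k−δ_{i−1})} for i = 2, …, n+1. Then: (a) each X_i and X_i* maps dom D into dom D; (b) for all v ∈ dom D, D X₁ v − X₁ D v = X₁ v and D X_i v − X_i D v = 0 for i = 2, …, n+1 (so [D, Ψ(a)] extends to a bounded operator for every a in the algebra generated by the X_i); (c) for n ≥ 1, D does not have compact resolvent, i.e. (D +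 i)⁻¹ is not a compact operator. -/
/-- The standard orthonormal basis vector of `ℓ²(ℤ × ℕⁿ)` at `(k₀, k)`. -/
noncomputable def eVecZ (n : ℕ) (p : ℤ × (Fin n → ℕ)) :
    lp (fun _ : ℤ × (Fin n → ℕ) => ℂ) 2 :=
  lp.single 2 p 1

/-- Membership in the natural domain of the unbounded operator
`D e_{(k₀,k)} = k₀ e_{(k₀,k)}` on `ℓ²(ℤ × ℕⁿ)`:  `Σ k₀² |v_{(k₀,k)}|² < ∞`. -/
def InDomD {n : ℕ} (v : lp (fun _ : ℤ × (Fin n → ℕ) => ℂ) 2) : Prop :=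
  Memℓp (fun p : ℤ × (Fin n → ℕ) => (p.1 : ℂ) * v p) 2

/-!
The eigenvalues of `D` grade `ℓ²`, and every generator shifts the grading by a constant `d`: `d = 1`
for `X₁` and `d = 0` for the others. A bounded operator of degree `d` satisfies `D T = T D + d T` in
matrix coordinates. On `dom D` the right-hand side is the sequence of an honest `ℓ²` vector, which
gives both the invariance of the domain and the commutator; the adjoint has degree `-d`.
The eigenvalue `0` of `D` has infinite multiplicity, so `(D + i)⁻¹` has an infinite-dimensional
eigenspace for the nonzero eigenvalue `i⁻¹`, which is impossible for a compact operator.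
-/

section Diagonal

variable {𝕜 α : Type*} [RCLike 𝕜]

/-- The natural domain of the diagonal operator on `ℓ²(α)` with eigenvalues `μ`, that is, of
multiplication by `μ`; `InDomD` is the case of the first coordinate `μ (k₀, k) = k₀`. -/
def InDiagonalDomain (μ : α → 𝕜) (v : lp (fun _ : α => 𝕜) 2) : Prop :=
  Memℓp (fun a => μ a * v a) 2

theorem orthonormal_lpSingle_one [DecidableEq α] :
    Orthonormal 𝕜 fun a : α => (lp.single 2 a 1 : lp (fun _ : α => 𝕜) 2) := by
  refine orthonormal_iff_ite.2 fun a b => ?_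
  simp [lp.inner_single_left, Pi.single_apply]

theorem mul_lpSingle_one_apply [DecidableEq α] (μ : α → 𝕜) (a b : α) :
    μ b * (lp.single 2 a 1 : lp (fun _ : α => 𝕜) 2) b =
      (μ a • lp.single 2 a 1 : lp (fun _ : α => 𝕜) 2) b := by
  obtain rfl | hb := eq_or_ne b a <;> simp_all

theorem inDiagonalDomain_lpSingle_one [DecidableEq α] (μ : α → 𝕜) (a : α) :
    InDiagonalDomain μ (lp.single 2 a 1) := by
  rw [InDiagonalDomain, funext (mul_lpSingle_one_apply μ a)]
  exact lp.memℓp _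

theorem apply_lpSingle_one_of_diagonal [DecidableEq α] {μ : α → 𝕜}
    {D : lp (fun _ : α => 𝕜) 2 → lp (fun _ : α => 𝕜) 2}
    (hD : ∀ v, InDiagonalDomain μ v → ∀ a, D v a = μ a * v a) (a : α) :
    D (lp.single 2 a 1) = μ a • lp.single 2 a 1 :=
  lp.ext <| funext fun b =>
    (hD _ (inDiagonalDomain_lpSingle_one μ a) b).trans (mul_lpSingle_one_apply μ a b)

end Diagonal

section Homogeneous

variable {𝕜 α : Type*} [RCLike 𝕜] [DecidableEq α]

theorem apply_eq_inner_star_lpSingle_one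
    (T : lp (fun _ : α => 𝕜) 2 →L[𝕜] lp (fun _ : α => 𝕜) 2) (v : lp (fun _ : α => 𝕜) 2) (b : α) :
    T v b = inner 𝕜 (star T (lp.single 2 b 1)) v := by
  rw [ContinuousLinearMap.star_eq_adjoint, ContinuousLinearMap.adjoint_inner_left,
    lp.inner_single_left, RCLike.inner_apply, map_one, mul_one]

theorem star_apply_lpSingle_one_apply
    (T : lp (fun _ : α => 𝕜) 2 →L[𝕜] lp (fun _ : α => 𝕜) 2) (a b : α) :
    star T (lp.single 2 b 1) a = star (T (lp.single 2 a 1) b) := by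
  rw [apply_eq_inner_star_lpSingle_one, star_star, lp.inner_single_right, RCLike.inner_apply,
    one_mul, starRingEnd_apply]

/-- `T` is homogeneous of degree `d` for the grading of `ℓ²(α)` by `μ`: it maps the closed span of
the basis vectors with `μ = m` into the one with `μ = m + d`, for every `m`. This is expressed
through the matrix coefficients of `T`. -/
def IsHomogeneous (μ : α → 𝕜) (d : 𝕜) (T : lp (fun _ : α => 𝕜) 2 →L[𝕜] lp (fun _ : α => 𝕜) 2) :
    Prop :=
  ∀ a b, T (lp.single 2 a 1) b ≠ 0 → μ b = μ a + d

variable {μ : α → 𝕜} {d : 𝕜} {T : lp (fun _ : α => 𝕜) 2 →L[𝕜] lp (fun _ : α => 𝕜) 2}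

theorem isHomogeneous_of_apply_lpSingle_one
    (hT : ∀ a, ∃ b, ∃ c : 𝕜, μ b = μ a + d ∧ T (lp.single 2 a 1) = c • lp.single 2 b 1) :
    IsHomogeneous μ d T := by
  intro a x hx
  obtain ⟨b, c, hb, hc⟩ := hT a
  obtain rfl : x = b := by
    by_contra hxb
    simp [hc, hxb] at hx
  exact hb

namespace IsHomogeneous

theorem star (hT : IsHomogeneous μ d T) : IsHomogeneous μ (-d) (star T) := by
  intro a b hab
  rw [star_apply_lpSingle_one_apply, star_ne_zero] at hab
  rw [hT b a hab, add_neg_cancel_right]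

theorem mul_apply_eq (hT : IsHomogeneous μ d T) {v w : lp (fun _ : α => 𝕜) 2}
    (hw : ∀ a, w a = μ a * v a) (b : α) : μ b * T v b = (T w + d • T v) b := by
  have coeff_mul (a : α) : μ b * inner 𝕜 (Star.star T (lp.single 2 b 1) a) (v a) =
      inner 𝕜 (Star.star T (lp.single 2 b 1) a) ((w + d • v) a) := by
    by_cases ha : T (lp.single 2 a 1) b = 0
    · simp [star_apply_lpSingle_one_apply, ha]
    · simp only [hT a b ha, lp.coeFn_add, lp.coeFn_smul, Pi.add_apply, Pi.smul_apply, hw,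
        smul_eq_mul, RCLike.inner_apply]
      ring
  calc μ b * T v b
      = ∑' a, μ b * inner 𝕜 (Star.star T (lp.single 2 b 1) a) (v a) := by
        rw [apply_eq_inner_star_lpSingle_one, lp.inner_eq_tsum, tsum_mul_left]
    _ = T (w + d • v) b := by
        rw [apply_eq_inner_star_lpSingle_one, lp.inner_eq_tsum, tsum_congr coeff_mul]
    _ = (T w + d • T v) b := by rw [map_add, map_smul]

theorem inDiagonalDomain (hT : IsHomogeneous μ d T) {v : lp (fun _ : α => 𝕜) 2}
    (hv : InDiagonalDomain μ v) : InDiagonalDomain μ (T v) := by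
  rw [InDiagonalDomain, funext (hT.mul_apply_eq (w := ⟨_, hv⟩) fun _ => rfl)]
  exact lp.memℓp _

theorem commutator_eq (hT : IsHomogeneous μ d T)
    {D : lp (fun _ : α => 𝕜) 2 → lp (fun _ : α => 𝕜) 2}
    (hD : ∀ v, InDiagonalDomain μ v → ∀ a, D v a = μ a * v a) {v : lp (fun _ : α => 𝕜) 2}
    (hv : InDiagonalDomain μ v) : D (T v) - T (D v) = d • T v := by
  rw [sub_eq_iff_eq_add']
  refine lp.ext (funext fun b => ?_)
  rw [hD _ (hT.inDiagonalDomain hv), hT.mul_apply_eq (hD v hv)]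

end IsHomogeneous

end Homogeneous

section Compact

variable {𝕜 : Type*} [RCLike 𝕜]

theorem finite_setOf_apply_eq_smul_of_isCompactOperator {E ι : Type*} [NormedAddCommGroup E]
    [InnerProductSpace 𝕜 E] [CompleteSpace E] {e : ι → E} (he : LinearIndependent 𝕜 e)
    {R : E →L[𝕜] E} (hR : IsCompactOperator R) {c : 𝕜} (hc : c ≠ 0) :
    {i | R (e i) = c • e i}.Finite := by
  have := ContinuousLinearMap.finite_dimensional_eigenspace hR c hc
  let f (i : {i | R (e i) = c • e i}) : Module.End.eigenspace R.toLinearMap c :=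
    ⟨e i, Module.End.mem_eigenspace_iff.2 i.2⟩
  have hf : LinearIndependent 𝕜 f :=
    .of_comp (Submodule.subtype _) (he.comp _ Subtype.val_injective)
  exact hf.finite

theorem not_isCompactOperator_resolvent_of_infinite_fiber {α : Type*} {μ : α → 𝕜}
    {m : 𝕜} (hm : (μ ⁻¹' {m}).Infinite) {D : lp (fun _ : α => 𝕜) 2 → lp (fun _ : α => 𝕜) 2}
    (hD : ∀ v, InDiagonalDomain μ v → ∀ a, D v a = μ a * v a) {z : 𝕜}
    {R : lp (fun _ : α => 𝕜) 2 →L[𝕜] lp (fun _ : α => 𝕜) 2}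
    (hR : ∀ v, InDiagonalDomain μ v → R (D v + z • v) = v) : ¬ IsCompactOperator R := by
  classical
  intro hcompact
  have smul_apply_single {a : α} (ha : μ a = m) :
      (m + z) • R (lp.single 2 a 1) = lp.single 2 a 1 := by
    rw [← map_smul, add_smul, ← ha, ← apply_lpSingle_one_of_diagonal hD]
    exact hR _ (inDiagonalDomain_lpSingle_one μ a)
  have hmz : m + z ≠ 0 := by
    intro h
    obtain ⟨a, ha⟩ := hm.nonempty
    apply (orthonormal_lpSingle_one (𝕜 := 𝕜)).ne_zero a
    rw [← smul_apply_single ha, h, zero_smul]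
  have hfinite := finite_setOf_apply_eq_smul_of_isCompactOperator
    (orthonormal_lpSingle_one (𝕜 := 𝕜) (α := α)).linearIndependent hcompact (inv_ne_zero hmz)
  exact hm (hfinite.subset fun a ha => (eq_inv_smul_iff₀ hmz).2 (smul_apply_single ha))

end Compact

theorem unbounded_Fredholm_module_D_general {𝕜 α ι : Type*} [RCLike 𝕜] [DecidableEq α]
    {μ : α → 𝕜} {m : 𝕜} (hm : (μ ⁻¹' {m}).Infinite) {d : ι → 𝕜}
    {X : ι → lp (fun _ : α => 𝕜) 2 →L[𝕜] lp (fun _ : α => 𝕜) 2}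
    (hX : ∀ i, IsHomogeneous μ (d i) (X i))
    {D : lp (fun _ : α => 𝕜) 2 → lp (fun _ : α => 𝕜) 2}
    (hD : ∀ v, InDiagonalDomain μ v → ∀ a, D v a = μ a * v a) :
    (∀ i v, InDiagonalDomain μ v →
      InDiagonalDomain μ (X i v) ∧ InDiagonalDomain μ (star (X i) v)) ∧
    (∀ i v, InDiagonalDomain μ v → D (X i v) - X i (D v) = d i • X i v) ∧
    (∀ (z : 𝕜) (R : lp (fun _ : α => 𝕜) 2 →L[𝕜] lp (fun _ : α => 𝕜) 2),
      (∀ v, InDiagonalDomain μ v → R (D v + z • v) = v) → ¬ IsCompactOperator R) :=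
  ⟨fun i _ hv => ⟨(hX i).inDiagonalDomain hv, (hX i).star.inDiagonalDomain hv⟩,
    fun i _ hv => (hX i).commutator_eq hD hv,
    fun _ _ hR => not_isCompactOperator_resolvent_of_infinite_fiber hm hD hR⟩

theorem infinite_preimage_fst_zero {n : ℕ} (hn : 1 ≤ n) :
    ((fun p : ℤ × (Fin n → ℕ) => (p.1 : ℂ)) ⁻¹' {0}).Infinite := by
  have : Nonempty (Fin n) := ⟨⟨0, hn⟩⟩
  refine (Set.infinite_range_of_injective (Prod.mk_right_injective (0 : ℤ))).mono ?_
  rintro _ ⟨k, rfl⟩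
  simp

/-- The unbounded operator `D = λ⁻¹ d/dλ` of the odd unbounded Fredholm module:  the
generators preserve its domain, `[D, X₁] = X₁` and `[D, Xᵢ] = 0` for `i ≥ 2` on the
domain (so all commutators with the algebra are bounded), but `D` does not have compact
resolvent. -/
theorem unbounded_Fredholm_module_D (q : ℝ) (hq : 1 < |q|) (n : ℕ) (hn : 1 ≤ n)
    (X : ℕ → (lp (fun _ : ℤ × (Fin n → ℕ) => ℂ) 2 →L[ℂ] lp (fun _ : ℤ × (Fin n → ℕ) => ℂ) 2))
    (hX1 : ∀ (k₀ : ℤ) (k : Fin n → ℕ),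
      X 1 (eVecZ n (k₀, k)) = (((q ^ (∑ j, k j))⁻¹ : ℝ) : ℂ) • eVecZ n (k₀ + 1, k))
    (hX1s : ∀ (k₀ : ℤ) (k : Fin n → ℕ),
      star (X 1) (eVecZ n (k₀, k)) = (((q ^ (∑ j, k j))⁻¹ : ℝ) : ℂ) • eVecZ n (k₀ - 1, k))
    (hXi : ∀ i : Fin n, ∀ (k₀ : ℤ) (k : Fin n → ℕ),
      X ((i : ℕ) + 2) (eVecZ n (k₀, k)) =
        (((Real.sqrt (1 - (q ^ (2 * k i))⁻¹) *
          (q ^ (∑ j ∈ Finset.univ.filter fun j => i < j, k j))⁻¹ : ℝ)) : ℂ) •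
          eVecZ n (k₀, Function.update k i (k i - 1)))
    (hXis : ∀ i : Fin n, ∀ (k₀ : ℤ) (k : Fin n → ℕ),
      star (X ((i : ℕ) + 2)) (eVecZ n (k₀, k)) =
        (((Real.sqrt (1 - (q ^ (2 * (k i + 1)))⁻¹) *
          (q ^ (∑ j ∈ Finset.univ.filter fun j => i < j, k j))⁻¹ : ℝ)) : ℂ) •
          eVecZ n (k₀, Function.update k i (k i + 1)))
    (D : lp (fun _ : ℤ × (Fin n → ℕ) => ℂ) 2 → lp (fun _ : ℤ × (Fin n → ℕ) => ℂ) 2)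
    (hD : ∀ v, InDomD v → ∀ p : ℤ × (Fin n → ℕ), (D v) p = (p.1 : ℂ) * v p) :
    (∀ i : ℕ, 1 ≤ i → i ≤ n + 1 → ∀ v, InDomD v →
      InDomD (X i v) ∧ InDomD (star (X i) v)) ∧
    (∀ v, InDomD v →
      D (X 1 v) - X 1 (D v) = X 1 v ∧
      ∀ i : ℕ, 2 ≤ i → i ≤ n + 1 → D (X i v) - X i (D v) = 0) ∧
    (∀ R : lp (fun _ : ℤ × (Fin n → ℕ) => ℂ) 2 →L[ℂ] lp (fun _ : ℤ × (Fin n → ℕ) => ℂ) 2,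
      (∀ v, InDomD v → R (D v + Complex.I • v) = v) → ¬ IsCompactOperator ⇑R) := by
  have hX : ∀ i : Set.Icc 1 (n + 1), IsHomogeneous (fun p : ℤ × (Fin n → ℕ) => (p.1 : ℂ))
      (if (i : ℕ) = 1 then 1 else 0) (X i) := by
    rintro ⟨_ | _ | i, hi⟩
    · simp at hi
    · exact isHomogeneous_of_apply_lpSingle_one fun p => ⟨_, _, by simp, hX1 p.1 p.2⟩
    · have hin : i < n := by simpa using hi
      exact isHomogeneous_of_apply_lpSingle_one fun p =>
        ⟨_, _, by simp, hXi ⟨i, hin⟩ p.1 p.2⟩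
  obtain ⟨hdom, hcomm, hres⟩ :=
    unbounded_Fredholm_module_D_general (infinite_preimage_fst_zero hn) hX hD
  refine ⟨fun i h1 hin => hdom ⟨i, h1, hin⟩, fun v hv => ⟨?_, fun i h2 hin => ?_⟩, hres Complex.I⟩
  · simpa using hcomm ⟨1, by simp⟩ v hv
  · simpa [show i ≠ 1 by omega] using hcomm ⟨i, by omega, hin⟩ v hv
end

section
/- Let A be a unital complex *-algebra, q a nonzero real number, and x₁, …, x_{n+1} ∈ A elements satisfying the S^{2n+1}_q relations: x_i x_j = q x_j x_i for 1 ≤ i < j ≤ n+1; x_i* x_j = q x_j x_i* for i ≠ j; x_i x_i* − x_i* x_i = (1 − q⁻²) s_{i−1} for i = 1, …, n+1 (with s₀ := 0, s_i := s_{i−1} + x_i* x_i); and s_{n+1} = 1. Let V := V_{(2n+1)} be the recursively defined unitary matrix over A. Then in the tensor product algebra A ⊗ A the following identity holds: (1/2) Σ_{i,j} (V_{ij} ⊗ (V*)_{ji} − (V*)_{ij} ⊗ V_{ji}) = (1/2)(q⁻² − 1)ⁿ (x₁ ⊗ x₁* − x₁* ⊗ x₁); that is, the low-degree Chern character ch_{1/2}(V_{(2n+1)})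 = (1/2) tr(V ⊗ V* − V* ⊗ V) equals (1/2)(q⁻²−1)ⁿ (x₁ ⊗ x₁* − x₁* ⊗ x₁). -/
open scoped TensorProduct

/-!
The trace `tr(V ⊗ V* - V* ⊗ V)` is the sum of `v ⊗ v* - v* ⊗ v` over the entries `v` of `V`. It is
therefore additive over blocks, odd under the adjoint, and scales by `c c*` under multiplication by
a scalar `c`. In the recursion for `V_{(2k+1)}` the two diagonal blocks are mutually adjoint and
cancel, while the off-diagonal ones contribute `q⁻²` and `-1` times the trace of `V_{(2k-1)}`.
-/

open Matrix

/-- The skew tensor `a ⊗ a* - a* ⊗ a`, the contribution of a matrix entry `a` to the Chern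
character. -/
def starSkewTensor (R : Type*) {A : Type*} [CommSemiring R] [AddCommGroup A] [Module R A] [Star A]
    (a : A) : A ⊗[R] A :=
  a ⊗ₜ[R] star a - star a ⊗ₜ[R] a

/-- The unnormalised low-degree Chern character `2 ch_{1/2}(M) = tr(M ⊗ M* - M* ⊗ M)`, written as a
sum over entries so that it also makes sense for rectangular blocks; `sum_tmul_star_sub_star_tmul`
identifies it with the trace for square `M`. -/
def chernTrace (R : Type*) {A m n : Type*} [CommSemiring R] [AddCommGroup A] [Module R A] [Star A]
    [Fintype m] [Fintype n] (M : Matrix m n A) : A ⊗[R] A :=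
  ∑ i, ∑ j, starSkewTensor R (M i j)

section StarSkewTensor

variable (R : Type*) {A : Type*} [CommSemiring R] [AddCommGroup A] [Module R A]

theorem starSkewTensor_star [InvolutiveStar A] (a : A) :
    starSkewTensor R (star a) = -starSkewTensor R a := by
  simp only [starSkewTensor, star_star, neg_sub]

theorem starSkewTensor_neg [StarAddMonoid A] (a : A) :
    starSkewTensor R (-a) = starSkewTensor R a := by
  simp only [starSkewTensor, star_neg, TensorProduct.neg_tmul, TensorProduct.tmul_neg, neg_neg]

theorem starSkewTensor_smul [Star R] [Star A] [StarModule R A] (c : R) (a : A) :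
    starSkewTensor R (c • a) = (c * star c) • starSkewTensor R a := by
  simp only [starSkewTensor, star_smul, TensorProduct.smul_tmul_smul, smul_sub, mul_comm (star c)]

end StarSkewTensor

section ChernTrace

variable (R : Type*) {A l m n o : Type*} [CommSemiring R] [AddCommGroup A] [Module R A]
  [Fintype l] [Fintype m] [Fintype n] [Fintype o]

theorem sum_tmul_star_sub_star_tmul [InvolutiveStar A] (M : Matrix n n A) :
    ∑ i, ∑ j, (M i j ⊗ₜ[R] star M j i - star M i j ⊗ₜ[R] M j i) = chernTrace R M := by
  have transpose_sum : ∑ i, ∑ j, star (M j i) ⊗ₜ[R] M j i = ∑ i, ∑ j, star (M i j) ⊗ₜ[R] M i j :=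
    Finset.sum_comm
  simp only [chernTrace, starSkewTensor, star_apply, Finset.sum_sub_distrib, transpose_sum]

theorem chernTrace_of_unique [Star A] [Unique m] [Unique n] (M : Matrix m n A) :
    chernTrace R M = starSkewTensor R (M default default) := by
  simp only [chernTrace, Fintype.sum_unique]

theorem chernTrace_reindex [Star A] (e : l ≃ m) (f : n ≃ o) (M : Matrix l n A) :
    chernTrace R (reindex e f M) = chernTrace R M := by
  simp only [chernTrace, reindex_apply, submatrix_apply]
  rw [e.symm.sum_comp fun i => ∑ j, starSkewTensor R (M i (f.symm j))]
  exact Finset.sum_congr rfl fun i _ => f.symm.sum_comp fun j => starSkewTensor R (M i j)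

theorem chernTrace_conjTranspose [InvolutiveStar A] (M : Matrix m n A) :
    chernTrace R Mᴴ = -chernTrace R M := by
  simp only [chernTrace, conjTranspose_apply, starSkewTensor_star, Finset.sum_neg_distrib]
  rw [Finset.sum_comm]

theorem chernTrace_neg [StarAddMonoid A] (M : Matrix m n A) :
    chernTrace R (-M) = chernTrace R M := by
  simp only [chernTrace, Matrix.neg_apply, starSkewTensor_neg]

theorem chernTrace_smul [Star R] [Star A] [StarModule R A] (c : R) (M : Matrix m n A) :
    chernTrace R (c • M) = (c * star c) • chernTrace R M := by
  simp only [chernTrace, Matrix.smul_apply, starSkewTensor_smul, Finset.smul_sum]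

theorem chernTrace_fromBlocks [Star A] (M₁₁ : Matrix l n A) (M₁₂ : Matrix l o A)
    (M₂₁ : Matrix m n A) (M₂₂ : Matrix m o A) :
    chernTrace R (fromBlocks M₁₁ M₁₂ M₂₁ M₂₂) =
      chernTrace R M₁₁ + chernTrace R M₁₂ + chernTrace R M₂₁ + chernTrace R M₂₂ := by
  simp only [chernTrace, Fintype.sum_sum_type, fromBlocks_apply₁₁, fromBlocks_apply₁₂,
    fromBlocks_apply₂₁, fromBlocks_apply₂₂, Finset.sum_add_distrib]
  abel

end ChernTrace

theorem chernTrace_fromBlocks_conjTranspose {R A n : Type*} [CommRing R] [Star R] [AddCommGroup A]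
    [StarAddMonoid A] [Module R A] [StarModule R A] [Fintype n] (c : R) (D V : Matrix n n A) :
    chernTrace R (fromBlocks D (c • V) (-Vᴴ) Dᴴ) = (c * star c - 1) • chernTrace R V := by
  rw [chernTrace_fromBlocks, chernTrace_smul, chernTrace_neg, chernTrace_conjTranspose,
    chernTrace_conjTranspose, sub_smul, one_smul]
  abel

theorem conjTranspose_smul_one {A n : Type*} [NonAssocSemiring A] [StarRing A] [DecidableEq n]
    (a : A) :
    (a • (1 : Matrix n n A))ᴴ = star a • (1 : Matrix n n A) := by
  simp only [smul_one_eq_diagonal, diagonal_conjTranspose, Pi.star_def]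

section VMat

variable {A : Type*} [Ring A] [Algebra ℂ A] [StarRing A]

theorem chernTrace_vMat_zero (q : ℝ) (x : ℕ → A) :
    chernTrace ℂ (vMat q x 0) = starSkewTensor ℂ (x 1) :=
  chernTrace_of_unique ℂ (m := Fin 1) (n := Fin 1) _

variable [StarModule ℂ A]

theorem chernTrace_vMat_succ (q : ℝ) (x : ℕ → A) (k : ℕ) :
    chernTrace ℂ (vMat q x (k + 1)) = (((q : ℂ) ^ 2)⁻¹ - 1) • chernTrace ℂ (vMat q x k) := by
  have norm_sq_inv : (q : ℂ)⁻¹ * star (q : ℂ)⁻¹ = ((q : ℂ) ^ 2)⁻¹ := by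
    rw [star_inv₀, Complex.star_def, Complex.conj_ofReal, ← mul_inv, ← sq]
  rw [vMat, chernTrace_reindex, ← conjTranspose_smul_one, star_eq_conjTranspose,
    chernTrace_fromBlocks_conjTranspose, norm_sq_inv]

theorem chernTrace_vMat (q : ℝ) (x : ℕ → A) (n : ℕ) :
    chernTrace ℂ (vMat q x n) = (((q : ℂ) ^ 2)⁻¹ - 1) ^ n • starSkewTensor ℂ (x 1) := by
  induction n with
  | zero => rw [chernTrace_vMat_zero, pow_zero, one_smul]
  | succ k ih => rw [chernTrace_vMat_succ, ih, smul_smul, ← pow_succ']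

/-- A nonzero `q` is encoded as a unit, since `q⁻¹` would be a junk value at `q = 0`. -/
theorem vMat_chern_character_general (q : ℝˣ) (n : ℕ) (x : ℕ → A) :
    (2 : ℂ)⁻¹ • (∑ i : Fin (2 ^ n), ∑ j : Fin (2 ^ n),
        ((vMat q x n) i j ⊗ₜ[ℂ] (star (vMat q x n)) j i -
          (star (vMat q x n)) i j ⊗ₜ[ℂ] (vMat q x n) j i)) =
      ((2 : ℂ)⁻¹ * ((((q : ℝ) : ℂ) ^ 2)⁻¹ - 1) ^ n) •
        (x 1 ⊗ₜ[ℂ] star (x 1) - star (x 1) ⊗ₜ[ℂ] x 1) := by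
  rw [sum_tmul_star_sub_star_tmul, chernTrace_vMat, smul_smul, starSkewTensor]

end VMat

/-- The low-degree Chern character of the unitary `V_{(2n+1)}`:
`ch_{1/2}(V) = ½ tr(V ⊗ V* - V* ⊗ V) = ½ (q⁻² - 1)ⁿ (x₁ ⊗ x₁* - x₁* ⊗ x₁)`
in `A ⊗ A`. -/
theorem vMat_chern_character {A : Type*} [Ring A] [Algebra ℂ A] [StarRing A] [StarModule ℂ A]
    (q : ℝ) (hq : q ≠ 0) (n : ℕ) (hn : 1 ≤ n) (x : ℕ → A)
    (hrel : OddSphereRel q n x) :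
    (2 : ℂ)⁻¹ • (∑ i : Fin (2 ^ n), ∑ j : Fin (2 ^ n),
        ((vMat q x n) i j ⊗ₜ[ℂ] (star (vMat q x n)) j i -
          (star (vMat q x n)) i j ⊗ₜ[ℂ] (vMat q x n) j i)) =
      ((2 : ℂ)⁻¹ * (((q : ℂ) ^ 2)⁻¹ - 1) ^ n) •
        (x 1 ⊗ₜ[ℂ] star (x 1) - star (x 1) ⊗ₜ[ℂ] x 1) :=
  vMat_chern_character_general (Units.mk0 q hq) n x
end
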